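/- For every k ∈ ℕ there exist constants c_k, d_k ∈ ℕ such that for every w ∈ ℕ, every graph in obs_{≤si}(C_{w,k}) has at most c_k·w + d_k vertices. -/

import Mathlib

/-- A finite undirected multigraph without loops. -/
structure Multigraph where
  V : Type
  E : Type
  finV : Finite V
  finE : Finite E
  ends : E → V × V
  loopless : ∀ e, (ends e).1 ≠ (ends e).2

attribute [instance] Multigraph.finV Multigraph.finE

namespace Multigraph

/-- `δ_G(S)`: the number of edges of `G` with exactly one endpoint in `S`. -/
noncomputable def delta (G : Multigraph) (S : Set G.V) : ℕ :=
  {e : G.E | ¬ ((G.ends e).1 ∈ S ↔ (G.ends e).2 ∈ S)}.ncard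

/-- The width `cw_σ(G)` of an ordering, represented as an injective ranking `ρ : V → ℕ`. -/
noncomputable def cwOrd (G : Multigraph) (ρ : G.V → ℕ) : ℕ :=
  sSup {w | ∃ v : G.V, w = G.delta {u | ρ u ≤ ρ v}}

/-- The cutwidth of a multigraph. -/
noncomputable def cutwidth (G : Multigraph) : ℕ :=
  sInf {w | ∃ ρ : G.V → ℕ, Function.Injective ρ ∧ G.cwOrd ρ = w}

/-- Walks in a multigraph. -/
inductive Walk (G : Multigraph) : G.V → G.V → Type
  | nil (v : G.V) : Walk G v v
  | cons {u v w : G.V} (e : G.E)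
      (h : G.ends e = (u, v) ∨ G.ends e = (v, u)) (p : Walk G v w) : Walk G u w

namespace Walk

def edges {G : Multigraph} : ∀ {u v : G.V}, G.Walk u v → List G.E
  | _, _, .nil _ => []
  | _, _, .cons e _ p => e :: p.edges

def support {G : Multigraph} : ∀ {u v : G.V}, G.Walk u v → List G.V
  | _, _, .nil v => [v]
  | u, _, .cons _ _ p => u :: p.support

end Walk

def Connected (G : Multigraph) : Prop := ∀ u v : G.V, Nonempty (G.Walk u v)

/-- An immersion model of `H` in `G`. -/
structure ImmersionModel (H G : Multigraph) where
  vmap : H.V → G.V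
  inj : Function.Injective vmap
  emap : (e : H.E) → G.Walk (vmap (H.ends e).1) (vmap (H.ends e).2)
  isPath : ∀ e, ((emap e).support).Nodup
  edgeDisj : ∀ e e', e ≠ e' → ∀ f, f ∈ (emap e).edges → f ∉ (emap e').edges

/-- `H ≤_i G`. -/
def Immersion (H G : Multigraph) : Prop := Nonempty (ImmersionModel H G)

/-- A strong immersion model: no internal vertex of a path is a branch vertex. -/
structure StrongImmersionModel (H G : Multigraph) extends ImmersionModel H G where
  strong : ∀ e, ∀ x, x ∈ (emap e).support →
    x ≠ vmap (H.ends e).1 → x ≠ vmap (H.ends e).2 → x ∉ Set.range vmap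

/-- `H ≤_si G`. -/
def StrongImmersion (H G : Multigraph) : Prop := Nonempty (StrongImmersionModel H G)

/-- Isomorphism of multigraphs. -/
structure Iso (G H : Multigraph) where
  fv : G.V ≃ H.V
  fe : G.E ≃ H.E
  pres : ∀ e, H.ends (fe e) = (fv (G.ends e).1, fv (G.ends e).2)
           ∨ H.ends (fe e) = (fv (G.ends e).2, fv (G.ends e).1)

def Isomorphic (G H : Multigraph) : Prop := Nonempty (Iso G H)

/-- The minimal obstruction set of a class `C` with respect to a partial order `le`. -/
def obstructions (le : Multigraph → Multigraph → Prop) (C : Set Multigraph) :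
    Set Multigraph :=
  {G | G ∉ C ∧ ∀ G', le G' G → ¬ G'.Isomorphic G → G' ∈ C}

/-- `C_k`: the class of multigraphs of cutwidth at most `k`. -/
def cutwidthClass (k : ℕ) : Set Multigraph := {G | G.cutwidth ≤ k}

/-- The degree of a vertex (each parallel edge counts once at each endpoint). -/
noncomputable def degree (G : Multigraph) (v : G.V) : ℕ :=
  {e : G.E | (G.ends e).1 = v ∨ (G.ends e).2 = v}.ncard

/-- The number of `A`-blocks of an ordering `ρ`: the number of maximal runs of
consecutive (in `ρ`) vertices belonging to `A`, counted via block-starting vertices. -/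
noncomputable def blockCount (G : Multigraph) (ρ : G.V → ℕ) (A : Set G.V) : ℕ :=
  {v : G.V | v ∈ A ∧ ∀ u : G.V, ρ u < ρ v →
      ∃ w : G.V, w ∉ A ∧ ρ u ≤ ρ w ∧ ρ w < ρ v}.ncard

/-- The extension `G*` of a `k`-boundaried graph `(G, x)`. -/
def extension (G : Multigraph) {k : ℕ} (x : Fin k → G.V) : Multigraph where
  V := G.V ⊕ Fin k
  E := G.E ⊕ Fin k
  finV := inferInstance
  finE := inferInstance
  ends := Sum.elim (fun e => (Sum.inl (G.ends e).1, Sum.inl (G.ends e).2))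
                   (fun i => (Sum.inl (x i), Sum.inr i))
  loopless := by
    rintro (e | i)
    · simpa using G.loopless e
    · simp

/-- The join `𝐀 ⊕ 𝐁` of two `k`-boundaried graphs. -/
def join {k : ℕ} (A B : Multigraph) (x : Fin k → A.V) (y : Fin k → B.V) : Multigraph where
  V := A.V ⊕ B.V
  E := (A.E ⊕ B.E) ⊕ Fin k
  finV := inferInstance
  finE := inferInstance
  ends := Sum.elim
    (Sum.elim (fun e => (Sum.inl (A.ends e).1, Sum.inl (A.ends e).2))
              (fun e => (Sum.inr (B.ends e).1, Sum.inr (B.ends e).2)))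
    (fun i => (Sum.inl (x i), Sum.inr (y i)))
  loopless := by
    rintro ((e | e) | i)
    · simpa using A.loopless e
    · simpa using B.loopless e
    · simp

/-- An `ℓ`-bucketing of an ordering `ρ` (buckets indexed 1,…,ℓ). -/
def IsBucketing (G : Multigraph) (ρ : G.V → ℕ) (ℓ : ℕ) (T : G.V → ℕ) : Prop :=
  (∀ v, 1 ≤ T v ∧ T v ≤ ℓ) ∧ ∀ u v : G.V, ρ u ≤ ρ v → T u ≤ T v

/-- `width(G,σ,T,i)`: the maximum size of a cut in `cuts(G,σ,T,i)`; these cuts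
are described by their left side `S`, which contains all buckets before `i`,
a `σ`-downward-closed part of bucket `i`, and nothing else. -/
noncomputable def bucketWidth (G : Multigraph) (ρ : G.V → ℕ) (T : G.V → ℕ) (i : ℕ) : ℕ :=
  sSup {w | ∃ S : Set G.V,
    (∀ v, T v < i → v ∈ S) ∧ (∀ v ∈ S, T v ≤ i) ∧
    (∀ u v : G.V, T u = i → T v = i → ρ u ≤ ρ v → v ∈ S → u ∈ S) ∧
    w = G.delta S}

/-- A `(k,ℓ)`-bucket interface. -/
structure BucketInterface (k ℓ : ℕ) where
  b : Fin k → ℕ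
  b' : Fin k → ℕ
  mu : ℕ → ℕ
  mu' : ℕ → ℕ
  b_mem : ∀ i, b i ∈ Set.Icc 1 ℓ
  b'_mem : ∀ i, b' i ∈ Set.Icc 1 ℓ
  mu_le : ∀ j, mu j ≤ k
  mu'_le : ∀ j, mu' j ≤ k

/-- A `k`-boundaried graph `(G, x)` conforms with a `(k,ℓ)`-bucket interface. -/
def Conforms {k : ℕ} (G : Multigraph) (x : Fin k → G.V) (ℓ : ℕ)
    (I : BucketInterface k ℓ) : Prop :=
  ∃ ρ : (G.extension x).V → ℕ, Function.Injective ρ ∧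
  ∃ T : (G.extension x).V → ℕ, (G.extension x).IsBucketing ρ ℓ T ∧
    (∀ v : G.V, Odd (T (Sum.inl v))) ∧
    (∀ i : Fin k, Even (T (Sum.inr i))) ∧
    (∀ i : Fin k, T (Sum.inl (x i)) = I.b i) ∧
    (∀ i : Fin k, T (Sum.inr i) = I.b' i) ∧
    (∀ j ∈ Set.Icc 1 ℓ,
      G.bucketWidth (fun v => ρ (Sum.inl v)) (fun v => T (Sum.inl v)) j ≤ I.mu j) ∧
    (∀ j ∈ Set.Icc 1 ℓ, (G.extension x).bucketWidth ρ T j ≤ I.mu' j)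

/-- `m` pairwise edge-disjoint paths between the sets `X` and `Y`. -/
def ConnectorBetween (G : Multigraph) (X Y : Set G.V) (m : ℕ) : Prop :=
  ∃ (s t : Fin m → G.V) (P : (i : Fin m) → G.Walk (s i) (t i)),
    (∀ i, s i ∈ X) ∧ (∀ i, t i ∈ Y) ∧ (∀ i, (P i).support.Nodup) ∧
    ∀ i j, i ≠ j → ∀ f, f ∈ (P i).edges → f ∉ (P j).edges

/-- A linked ordering. -/
def Linked (G : Multigraph) (ρ : G.V → ℕ) : Prop :=
  ∀ u u' : G.V, ρ u ≤ ρ u' →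
    G.ConnectorBetween {z | ρ z ≤ ρ u} {z | ¬ ρ z ≤ ρ u'}
      (sInf {w | ∃ v : G.V, ρ u ≤ ρ v ∧ ρ v ≤ ρ u' ∧ w = G.delta {z | ρ z ≤ ρ v}})

/-- The multigraph obtained by deleting a set of edges. -/
def deleteEdges (G : Multigraph) (F : Set G.E) : Multigraph where
  V := G.V
  E := {e : G.E // e ∉ F}
  finV := G.finV
  finE := inferInstance
  ends e := G.ends e.1
  loopless e := G.loopless e.1

/-- `dcw_k(G)`: minimum number of edges to delete to reach cutwidth at most `k`. -/
noncomputable def dcw (k : ℕ) (G : Multigraph) : ℕ :=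
  sInf {w | ∃ F : Set G.E, (G.deleteEdges F).cutwidth ≤ k ∧ F.ncard = w}

/-- The class `C_{w,k}`. -/
def dcwClass (w k : ℕ) : Set Multigraph := {G | dcw k G ≤ w}

/-- Induced subgraph `G[X]`. -/
def induce (G : Multigraph) (X : Set G.V) : Multigraph where
  V := X
  E := {e : G.E // (G.ends e).1 ∈ X ∧ (G.ends e).2 ∈ X}
  finV := inferInstance
  finE := inferInstance
  ends e := (⟨(G.ends e.1).1, e.2.1⟩, ⟨(G.ends e.1).2, e.2.2⟩)
  loopless := by
    intro e h
    exact G.loopless e.1 (Subtype.ext_iff.mp h)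

/-- A graph is `ℋ`-immersion-free if it contains no member of `ℋ` as an immersion. -/
def ImmersionFree (H : Set Multigraph) (G : Multigraph) : Prop :=
  ∀ X ∈ H, ¬ Immersion X G

/-- `aic_ℋ(G)`: minimum number of edge deletions to reach an `ℋ`-immersion-free graph. -/
noncomputable def aic (H : Set Multigraph) (G : Multigraph) : ℕ :=
  sInf {w | ∃ F : Set G.E, ImmersionFree H (G.deleteEdges F) ∧ F.ncard = w}

/-- The class `C_{w,ℋ}`. -/
def aicClass (w : ℕ) (H : Set Multigraph) : Set Multigraph := {G | aic H G ≤ w}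

/-- `ℋ` is a `≤_i`-antichain. -/
def IsAntichainImm (H : Set Multigraph) : Prop :=
  ∀ G₁ ∈ H, ∀ G₂ ∈ H, Immersion G₁ G₂ → Isomorphic G₁ G₂

/-- Disjoint union of two multigraphs. -/
def disjUnion (G H : Multigraph) : Multigraph where
  V := G.V ⊕ H.V
  E := G.E ⊕ H.E
  finV := inferInstance
  finE := inferInstance
  ends := Sum.elim (fun e => (Sum.inl (G.ends e).1, Sum.inl (G.ends e).2))
                   (fun e => (Sum.inr (H.ends e).1, Sum.inr (H.ends e).2))
  loopless := by
    rintro (e | e)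
    · simpa using G.loopless e
    · simpa using H.loopless e

/-- Disjoint union of a finite family of multigraphs. -/
def sigmaUnion {m : ℕ} (Gs : Fin m → Multigraph) : Multigraph where
  V := Σ i, (Gs i).V
  E := Σ i, (Gs i).E
  finV := inferInstance
  finE := inferInstance
  ends e := (⟨e.1, ((Gs e.1).ends e.2).1⟩, ⟨e.1, ((Gs e.1).ends e.2).2⟩)
  loopless := by
    intro e h
    exact (Gs e.1).loopless e.2 (by simpa using h)

/-- `cw_σ(G,X) = δ_G(X) + cw_{σ_X}(G[X])`. -/
noncomputable def cwRel (G : Multigraph) (ρ : G.V → ℕ) (X : Set G.V) : ℕ :=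
  G.delta X + (G.induce X).cwOrd (fun v => ρ v.val)

/-- Membership in the family of prefixes relevant to `X`-linkedness: the complement
of `X` (the prefix right before `X` starts) and the prefixes ending inside `X`. -/
def IsXPrefix (G : Multigraph) (ρ : G.V → ℕ) (X : Set G.V) (P : Set G.V) : Prop :=
  P = Xᶜ ∨ ∃ v ∈ X, P = {z | ρ z ≤ ρ v}

/-- An `X`-linked ordering. -/
def XLinked (G : Multigraph) (ρ : G.V → ℕ) (X : Set G.V) : Prop :=
  (∀ u v : G.V, u ∉ X → v ∈ X → ρ u < ρ v) ∧
  ∀ P P' : Set G.V, G.IsXPrefix ρ X P → G.IsXPrefix ρ X P' → P ⊆ P' →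
    G.ConnectorBetween P P'ᶜ
      (sInf {w | ∃ Q : Set G.V, G.IsXPrefix ρ X Q ∧ P ⊆ Q ∧ Q ⊆ P' ∧ w = G.delta Q})

end Multigraph

attribute [reducible] Multigraph.deleteEdges Multigraph.induce Multigraph.join

/-!
Deleting one edge of an obstruction `G` leaves a graph in the class, so `w + 1` edges suffice to
bring `G` down to cutwidth `k`. If `G` is large, some long stretch of the resulting ordering avoids
the ends of these edges, and its initial segments form a long chain of vertex sets with at most
`2 * k` leaving edges. A pigeonhole argument on the cut sizes gives a long subchain
`T 0 ⊂ T 1 ⊂ ⋯` of sets with exactly `m` leaving edges and no smaller cut in between. By Menger's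
theorem `m` edge-disjoint paths run along the whole subchain; each crosses every `T i` in a single
edge, so they label the boundaries of all `G[T i]` consistently.

How `G[T i]` behaves in a join with an arbitrary graph depends only on its signature. An ordering of
a join interleaves orderings of the two sides, and from the point of view of the other side an
ordering of `G[T i]` is a word which can be shortened to bounded length, as in the theory of typical
sequences. Hence there are finitely many signatures, and two sets `T i ⊂ T j` have the same one.
Rerouting along the `m` paths shows that replacing `G[T j]` by `G[T i]` yields a proper strong
immersion of `G`, which lies in the class; equality of the signatures then puts `G` in the class.
-/

/-- A monotone lattice path through the grid `as × bs`, from the first cell to the last, all of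
whose cells satisfy `R`. It records how two linear orders, with lists of prefixes `as` and `bs`, are
interleaved into one. There is no such path if one of the lists is empty. -/
inductive Merge {α β : Type*} (R : α → β → Prop) : List α → List β → Prop
  | single {a : α} {b : β} : R a b → Merge R [a] [b]
  | left {a : α} {b : β} {as : List α} {bs : List β} :
      R a b → Merge R as (b :: bs) → Merge R (a :: as) (b :: bs)
  | right {a : α} {b : β} {as : List α} {bs : List β} :
      R a b → Merge R (a :: as) bs → Merge R (a :: as) (b :: bs)

namespace Merge

variable {α β : Type*} {R : α → β → Prop} {a : α} {b : β} {as cs : List α} {bs bs' : List β}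

lemma ne_nil_left (h : Merge R as bs) : as ≠ [] := by
  cases h <;> exact List.cons_ne_nil _ _

lemma ne_nil_right (h : Merge R as bs) : bs ≠ [] := by
  cases h <;> exact List.cons_ne_nil _ _

lemma cons_cons_iff : Merge R (a :: as) (b :: bs) ↔
    R a b ∧ (as = [] ∧ bs = [] ∨ Merge R as (b :: bs) ∨ Merge R (a :: as) bs) := by
  constructor
  · intro h
    cases h with
    | single h => exact ⟨h, .inl ⟨rfl, rfl⟩⟩
    | left h h' => exact ⟨h, .inr (.inl h')⟩
    | right h h' => exact ⟨h, .inr (.inr h')⟩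
  · rintro ⟨h, ⟨rfl, rfl⟩ | h' | h'⟩
    exacts [.single h, .left h h', .right h h']

lemma flip (h : Merge R as bs) : Merge (fun b a => R a b) bs as := by
  induction h with
  | single h => exact .single h
  | left h _ ih => exact .right h ih
  | right h _ ih => exact .left h ih

lemma map_iff {α' β' : Type*} {R : α' → β' → Prop} {f : α → α'} {g : β → β'} :
    Merge R (as.map f) (bs.map g) ↔ Merge (fun a b => R (f a) (g b)) as bs := by
  induction as generalizing bs with
  | nil => exact iff_of_false (fun h => h.ne_nil_left rfl) (fun h => h.ne_nil_left rfl)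
  | cons a as ihas =>
    induction bs with
    | nil => exact iff_of_false (fun h => h.ne_nil_right rfl) (fun h => h.ne_nil_right rfl)
    | cons b bs ihbs =>
      have hleft := ihas (bs := b :: bs)
      simp only [List.map_cons] at hleft ihbs ⊢
      simp only [cons_cons_iff, hleft, ihbs, List.map_eq_nil_iff]

lemma exists_left (h : Merge R as bs) : ∀ b ∈ bs, ∃ a ∈ as, R a b := by
  induction h with
  | single h => simpa using h
  | left _ _ ih => exact fun b hb => (ih b hb).imp fun a ha => ⟨.tail _ ha.1, ha.2⟩
  | right h _ ih => exact List.forall_mem_cons.2 ⟨⟨_, .head _, h⟩, ih⟩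

lemma exists_right (h : Merge R as bs) : ∀ a ∈ as, ∃ b ∈ bs, R a b :=
  h.flip.exists_left

lemma singleton_left_iff : Merge R [a] bs ↔ bs ≠ [] ∧ ∀ b ∈ bs, R a b := by
  refine ⟨fun h => ⟨h.ne_nil_right, fun b hb => by simpa using h.exists_left b hb⟩, ?_⟩
  rintro ⟨hne, hR⟩
  induction bs with
  | nil => exact absurd rfl hne
  | cons b bs ih =>
    obtain ⟨hb, hbs⟩ := List.forall_mem_cons.1 hR
    obtain rfl | hne := eq_or_ne bs []
    exacts [.single hb, .right hb (ih hne hbs)]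

lemma singleton_right_iff : Merge R as [b] ↔ as ≠ [] ∧ ∀ a ∈ as, R a b :=
  ⟨fun h => singleton_left_iff.1 h.flip, fun h => (singleton_left_iff.2 h).flip⟩

lemma append_left (has : ∀ a ∈ as, R a b) (h : Merge R cs (b :: bs)) :
    Merge R (as ++ cs) (b :: bs) := by
  induction as with
  | nil => exact h
  | cons a as ih =>
    obtain ⟨ha, has⟩ := List.forall_mem_cons.1 has
    exact .left ha (ih has)

lemma append (h : Merge R as (bs ++ [b])) (h' : Merge R cs (b :: bs')) :
    Merge R (as ++ cs) (bs ++ b :: bs') := by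
  generalize hl : bs ++ [b] = l at h
  induction h generalizing bs with
  | single hab =>
    obtain ⟨rfl, rfl⟩ : bs = [] ∧ b = _ := by simpa [List.append_eq_singleton_iff] using hl
    exact .left hab h'
  | left hab _ ih =>
    have := ih hl
    cases bs <;> simp_all [Merge.left]
  | right hab hm ih =>
    cases bs with
    | nil => exact absurd (List.cons.inj hl).2.symm hm.ne_nil_right
    | cons c bs =>
      obtain ⟨rfl, hl'⟩ := List.cons.inj hl
      exact .right hab (ih hl')

lemma exists_split (h : Merge R (as ++ cs) bs) (has : as ≠ []) (hcs : cs ≠ []) :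
    ∃ bs₁ b bs₂, bs = bs₁ ++ b :: bs₂ ∧ Merge R as (bs₁ ++ [b]) ∧ Merge R cs (b :: bs₂) := by
  generalize hl : as ++ cs = l at h
  induction h generalizing as with
  | single => simp [List.append_eq_singleton_iff, has, hcs] at hl
  | @left a b _ bs hab hm ih =>
    obtain ⟨a', as, rfl⟩ := List.exists_cons_of_ne_nil has
    obtain ⟨rfl, rfl⟩ := List.cons.inj hl
    obtain rfl | has' := eq_or_ne as []
    · exact ⟨[], b, bs, rfl, .single hab, hm⟩
    · obtain ⟨bs₁, b', bs₂, hbs, h₁, h₂⟩ := ih has' rfl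
      refine ⟨bs₁, b', bs₂, hbs, ?_, h₂⟩
      cases bs₁ <;> simp_all [Merge.left]
  | @right a b _ bs hab hm ih =>
    obtain ⟨bs₁, b', bs₂, rfl, h₁, h₂⟩ := ih has hl
    obtain ⟨a', as, rfl⟩ := List.exists_cons_of_ne_nil has
    obtain ⟨rfl, rfl⟩ := List.cons.inj hl
    exact ⟨b :: bs₁, b', bs₂, rfl, .right hab h₁, h₂⟩

lemma append_iff (has : as ≠ []) (hcs : cs ≠ []) : Merge R (as ++ cs) bs ↔
    ∃ bs₁ b bs₂, bs = bs₁ ++ b :: bs₂ ∧ Merge R as (bs₁ ++ [b]) ∧ Merge R cs (b :: bs₂) :=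
  ⟨fun h => h.exists_split has hcs, fun ⟨_, _, _, hbs, h₁, h₂⟩ => hbs ▸ h₁.append h₂⟩

lemma reverse (h : Merge R as bs) : Merge R as.reverse bs.reverse := by
  induction h with
  | single h => exact .single h
  | left h _ ih =>
    rw [List.reverse_cons] at ih
    simpa only [List.reverse_cons] using ih.append (.single h)
  | right h _ ih =>
    rw [List.reverse_cons] at ih
    simpa only [List.reverse_cons] using (ih.flip.append (.single h)).flip

end Merge

/-- Two words over a preorder are equivalent if they merge with the same sequences of constraints,
where a constraint on letters is a lower set. -/
def MergeEquiv {α : Type*} [Preorder α] (as as' : List α) : Prop :=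
  ∀ bs : List (LowerSet α), Merge (· ∈ ·) as bs ↔ Merge (· ∈ ·) as' bs

lemma exists_eq_append_cons_notMem {α : Type*} {d : α} {s : List α} (h : d ∈ s) :
    ∃ mid t, s = mid ++ d :: t ∧ d ∉ t := by
  obtain ⟨t, mid, hs, hd⟩ := List.eq_append_cons_of_mem (List.mem_reverse.2 h)
  exact ⟨mid.reverse, t.reverse, by simpa using congrArg List.reverse hs, by simpa using hd⟩

namespace MergeEquiv

variable {α : Type*} [Preorder α] {as as' as'' cs cs' : List α}

lemma refl (as : List α) : MergeEquiv as as := fun _ => Iff.rfl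

lemma symm (h : MergeEquiv as as') : MergeEquiv as' as := fun bs => (h bs).symm

lemma trans (h : MergeEquiv as as') (h' : MergeEquiv as' as'') : MergeEquiv as as'' :=
  fun bs => (h bs).trans (h' bs)

lemma eq_nil_iff (h : MergeEquiv as as') : as = [] ↔ as' = [] := by
  simpa [Merge.singleton_right_iff] using (h [⊤]).not

lemma append (h : MergeEquiv as as') (h' : MergeEquiv cs cs') :
    MergeEquiv (as ++ cs) (as' ++ cs') := by
  obtain rfl | has := eq_or_ne as []
  · rwa [h.eq_nil_iff.1 rfl]
  obtain rfl | hcs := eq_or_ne cs []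
  · rwa [h'.eq_nil_iff.1 rfl, List.append_nil, List.append_nil]
  intro bs
  simp only [Merge.append_iff has hcs,
    Merge.append_iff (h.eq_nil_iff.not.1 has) (h'.eq_nil_iff.not.1 hcs), h _, h' _]

lemma cons (a : α) (h : MergeEquiv as as') : MergeEquiv (a :: as) (a :: as') :=
  (refl [a]).append h

lemma reverse (h : MergeEquiv as as') : MergeEquiv as.reverse as'.reverse := by
  have key : ∀ {as as' : List α}, MergeEquiv as as' → ∀ bs : List (LowerSet α),
      Merge (· ∈ ·) as.reverse bs → Merge (· ∈ ·) as'.reverse bs := fun {as as'} h bs hm => by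
    simpa using ((h bs.reverse).1 (by simpa using hm.reverse)).reverse
  exact fun bs => ⟨key h bs, key h.symm bs⟩

/-- A merge may wait at the minimum while the constraints become favourable, then run through to the
maximum at once. -/
lemma of_forall_between {u v : α} {mid : List α}
    (h : (∀ z ∈ mid, u ≤ z ∧ z ≤ v) ∨ (∀ z ∈ mid, v ≤ z ∧ z ≤ u)) :
    MergeEquiv (u :: (mid ++ [v])) [u, v] := by
  intro bs
  rw [show u :: (mid ++ [v]) = [u] ++ (mid ++ [v]) from rfl, show [u, v] = [u] ++ [v] from rfl,
    Merge.append_iff (by simp) (by simp)]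
  constructor
  · intro hm
    rcases h with h | h
    · rw [← Merge.append_iff (by simp) (by simp), ← List.append_assoc,
        Merge.append_iff (by simp) (by simp)] at hm
      obtain ⟨bs₁, b, bs₂, rfl, h₁, h₂⟩ := hm
      refine (Merge.singleton_left_iff.2 ⟨by simp, fun c hc => ?_⟩).append h₂
      obtain ⟨z, hz, hzc⟩ := h₁.exists_left c hc
      exact c.lower ((List.forall_mem_cons.2 ⟨le_rfl, fun z hz => (h z hz).1⟩ : _) z hz) hzc
    · obtain ⟨bs₁, b, bs₂, rfl, h₁, h₂⟩ := hm
      refine h₁.append (Merge.singleton_left_iff.2 ⟨by simp, fun c hc => ?_⟩)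
      obtain ⟨z, hz, hzc⟩ := h₂.exists_left c hc
      refine c.lower ?_ hzc
      obtain hz | rfl : z ∈ mid ∨ z = v := by simpa using hz
      exacts [(h z hz).1, le_rfl]
  · rw [Merge.append_iff (by simp) (by simp)]
    rintro ⟨bs₁, b, bs₂, rfl, h₁, h₂⟩
    have hu : u ∈ b := (Merge.singleton_left_iff.1 h₁).2 b (by simp)
    have hv : v ∈ b := (Merge.singleton_left_iff.1 h₂).2 b (by simp)
    refine ⟨bs₁, b, bs₂, rfl, h₁, h₂.append_left fun z hz => ?_⟩
    rcases h with h | h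
    exacts [b.lower (h z hz).2 hv, b.lower (h z hz).2 hu]

lemma cons_append_cons_of_forall_between {u v : α} {mid : List α}
    (h : (∀ z ∈ mid, u ≤ z ∧ z ≤ v) ∨ (∀ z ∈ mid, v ≤ z ∧ z ≤ u)) (cs : List α) :
    MergeEquiv (u :: (mid ++ v :: cs)) (u :: v :: cs) := by
  simpa using (of_forall_between h).append (refl cs)

/-- After an extreme entry only the last occurrence of the opposite extreme matters, and after that
one the range of values is smaller. -/
lemma exists_short_of_extreme {f : ℕ → α} (hf : Monotone f) (n lo e : ℕ) (s : List ℕ)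
    (hs : ∀ z ∈ s, lo ≤ z ∧ z < lo + n) (he : e ≤ lo ∨ lo + n ≤ e + 1) :
    ∃ s' ⊆ s, s'.length ≤ n ∧ MergeEquiv ((e :: s).map f) ((e :: s').map f) := by
  induction n generalizing lo e s with
  | zero =>
    obtain rfl : s = [] := List.eq_nil_iff_forall_not_mem.2 fun z hz => by have := hs z hz; omega
    exact ⟨[], by simp, by simp, refl _⟩
  | succ n ih =>
    have step (d lo' : ℕ) (hd : (∀ z ∈ s, e ≤ z ∧ z ≤ d) ∨ (∀ z ∈ s, d ≤ z ∧ z ≤ e))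
        (hs' : ∀ z ∈ s, z ≠ d → lo' ≤ z ∧ z < lo' + n) (he' : e ≤ lo' ∨ lo' + n ≤ e + 1)
        (hd' : d ≤ lo' ∨ lo' + n ≤ d + 1) :
        ∃ s' ⊆ s, s'.length ≤ n + 1 ∧ MergeEquiv ((e :: s).map f) ((e :: s').map f) := by
      by_cases hds : d ∈ s
      · obtain ⟨mid, t, rfl, hdt⟩ := exists_eq_append_cons_notMem hds
        obtain ⟨t', htt', hlen, heq⟩ := ih lo' d t
          (fun z hz => hs' z (by simp [hz]) (ne_of_mem_of_not_mem hz hdt)) hd'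
        refine ⟨d :: t', List.cons_subset.2 ⟨by simp, fun z hz => by simp [htt' hz]⟩,
          Nat.succ_le_succ hlen, ?_⟩
        simp only [List.forall_mem_append] at hd
        rw [List.map_cons, List.map_append, List.map_cons]
        refine (cons_append_cons_of_forall_between (hd.imp ?_ ?_) _).trans (heq.cons (f e)) <;>
        · rw [List.forall_mem_map]
          exact fun h z hz => ⟨hf (h.1 z hz).1, hf (h.1 z hz).2⟩
      · obtain ⟨s', hss', hlen, heq⟩ :=
          ih lo' e s (fun z hz => hs' z hz (by rintro rfl; exact hds hz)) he'
        exact ⟨s', hss', by omega, heq⟩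
    rcases he with he | he
    · refine step (lo + n) lo (.inl fun z hz => ?_) (fun z hz _ => ?_) (.inl he) (by omega) <;>
      · have := hs z hz
        omega
    · refine step lo (lo + 1) (.inr fun z hz => ?_) (fun z hz _ => ?_) (by omega) (by omega) <;>
      · have := hs z hz
        omega

lemma exists_short_of_lt {f : ℕ → α} (hf : Monotone f) (n : ℕ) (s : List ℕ)
    (hs : ∀ z ∈ s, z < n) :
    ∃ s' ⊆ s, s'.length ≤ 2 * n + 1 ∧ MergeEquiv (s.map f) (s'.map f) := by
  obtain rfl | hne := eq_or_ne s []
  · exact ⟨[], by simp, by simp, refl _⟩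
  obtain ⟨m, hm, hmin⟩ := s.toFinset.exists_min_image id (by simpa using hne)
  simp only [List.mem_toFinset, id_eq] at hm hmin
  obtain ⟨p, q, rfl⟩ := List.append_of_mem hm
  obtain ⟨q', hqq', hqlen, hq⟩ := exists_short_of_extreme hf n m m q
    (fun z hz => ⟨hmin z (by simp [hz]), (hs z (by simp [hz])).trans_le (by omega)⟩) (.inl le_rfl)
  obtain ⟨p', hpp', hplen, hp⟩ := exists_short_of_extreme hf n m m p.reverse
    (fun z hz => ⟨hmin z (by simp_all), (hs z (by simp_all)).trans_le (by omega)⟩) (.inl le_rfl)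
  refine ⟨p'.reverse ++ m :: q', ?_, by simp; omega, ?_⟩
  · intro z hz
    have hp : z ∈ p' → z ∈ p := fun h => by simpa using hpp' h
    have hq : z ∈ q' → z ∈ q := fun h => hqq' h
    simp only [List.mem_append, List.mem_reverse, List.mem_cons] at hz ⊢
    tauto
  · have h₁ := (refl (p.map f)).append hq
    have h₂ := hp.reverse.append (refl (q'.map f))
    simp only [List.map_append, List.map_cons, List.map_reverse, List.reverse_cons,
      List.reverse_reverse, List.append_assoc, List.singleton_append] at h₁ h₂ ⊢
    exact h₁.trans h₂

end MergeEquiv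

/-- The trace of a cut on one side of a graph with `m` boundary edges: the boundary edges whose end
on this side precedes the cut, and the number of edges of this side in the cut. In the order of a
`Σ`-type, letters with different label sets are incomparable. -/
abbrev Letter (m : ℕ) : Type := Σ _ : Finset (Fin m), ℕ

lemma Letter.exists_eq_map_append {m : ℕ} (L : Finset (Fin m)) (ws : List (Letter m))
    (hmono : ws.Pairwise fun a b => a.1 ⊆ b.1) (hL : ∀ a ∈ ws, L ⊆ a.1) :
    ∃ (ns : List ℕ) (ws' : List (Letter m)),
      ws = ns.map (Sigma.mk L) ++ ws' ∧ ∀ a ∈ ws', L ⊂ a.1 := by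
  induction ws with
  | nil => exact ⟨[], [], rfl, by simp⟩
  | cons a ws ih =>
    obtain ⟨hle, hmono⟩ := List.pairwise_cons.1 hmono
    obtain ⟨ha, hL⟩ := List.forall_mem_cons.1 hL
    obtain rfl | hlt := ha.eq_or_ssubset
    · obtain ⟨ns, ws', rfl, hws'⟩ := ih hmono hL
      exact ⟨a.2 :: ns, ws', rfl, hws'⟩
    · exact ⟨[], a :: ws, rfl,
        List.forall_mem_cons.2 ⟨hlt, fun b hb => hlt.trans_subset (hle b hb)⟩⟩

lemma Letter.exists_short {m : ℕ} (k : ℕ) (ws : List (Letter m))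
    (hmono : ws.Pairwise fun a b => a.1 ⊆ b.1) (hk : ∀ a ∈ ws, a.2 ≤ k) :
    ∃ ws' ⊆ ws, ws'.length ≤ (m + 1) * (2 * (k + 1) + 1) ∧ MergeEquiv ws ws' := by
  suffices key : ∀ (j : ℕ) (ws : List (Letter m)), (ws.Pairwise fun a b => a.1 ⊆ b.1) →
      (∀ a ∈ ws, a.2 ≤ k) → (∀ a ∈ ws, m < a.1.card + j) →
      ∃ ws' ⊆ ws, ws'.length ≤ j * (2 * (k + 1) + 1) ∧ MergeEquiv ws ws' from
    key (m + 1) ws hmono hk fun a _ => by omega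
  intro j
  induction j with
  | zero =>
    intro ws _ _ hcard
    obtain rfl : ws = [] := List.eq_nil_iff_forall_not_mem.2 fun a ha =>
      (hcard a ha).not_ge (by simpa using card_finset_fin_le a.1)
    exact ⟨[], by simp, by simp, .refl _⟩
  | succ j ih =>
    rintro (_ | ⟨a, ws⟩) hmono hk hcard
    · exact ⟨[], by simp, by simp, .refl _⟩
    obtain ⟨ns, ws₂, hws, hlt⟩ := exists_eq_map_append a.1 (a :: ws) hmono
      (List.forall_mem_cons.2 ⟨subset_rfl, (List.pairwise_cons.1 hmono).1⟩)
    have ha := hcard a (by simp)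
    have hf : Monotone fun n => (⟨a.1, n⟩ : Letter m) := fun _ _ h => Sigma.mk_le_mk_iff.2 h
    rw [hws] at hmono hk hcard ⊢
    obtain ⟨ns', hns, hlen, heq⟩ := MergeEquiv.exists_short_of_lt hf (k + 1) ns
      (fun z hz => Nat.lt_succ_of_le
        (hk _ (List.mem_append_left _ (List.mem_map_of_mem hz))))
    obtain ⟨ws₂', hws₂, hlen₂, heq₂⟩ := ih ws₂ (List.pairwise_append.1 hmono).2.1
      (fun b hb => hk b (by simp [hb]))
      (fun b hb => by have := Finset.card_lt_card (hlt b hb); omega)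
    refine ⟨ns'.map (Sigma.mk a.1) ++ ws₂', ?_, ?_, heq.append heq₂⟩
    · exact List.append_subset.2
        ⟨List.Subset.trans (List.map_subset _ hns) (List.subset_append_left _ _),
          List.Subset.trans hws₂ (List.subset_append_right _ _)⟩
    · rw [List.length_append, List.length_map, Nat.succ_mul]
      omega

section Orderings

variable {α β : Type*}

/-- The sets `S ∪ {v | v ∈ l'}` for the prefixes `l'` of `l`, in increasing order. For `S = ∅` and a
list `l` of all vertices these are the prefixes of a vertex ordering; repetitions in `l` only repeat
prefixes. -/
def prefixSets (S : Set α) (l : List α) : List (Set α) :=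
  l.scanl (fun T v => insert v T) S

lemma prefixSets_nil (S : Set α) : prefixSets S [] = [S] := List.scanl_nil

lemma prefixSets_cons (S : Set α) (v : α) (l : List α) :
    prefixSets S (v :: l) = S :: prefixSets (insert v S) l := List.scanl_cons

lemma exists_prefixSets_eq_cons (S : Set α) (l : List α) : ∃ Ts, prefixSets S l = S :: Ts := by
  cases l <;> simp [prefixSets_nil, prefixSets_cons]

lemma prefixSets_ne_nil (S : Set α) (l : List α) : prefixSets S l ≠ [] := by
  obtain ⟨Ts, hTs⟩ := exists_prefixSets_eq_cons S l
  simp [hTs]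

lemma exists_prefixSets_eq_concat (S : Set α) (l : List α) :
    ∃ Ts, prefixSets S l = Ts ++ [S ∪ {v | v ∈ l}] := by
  induction l generalizing S with
  | nil => exact ⟨[], by simp [prefixSets_nil]⟩
  | cons v l ih =>
    obtain ⟨Ts, hTs⟩ := ih (insert v S)
    refine ⟨S :: Ts, ?_⟩
    rw [prefixSets_cons, hTs, List.cons_append]
    congr 3
    ext u
    simp [or_assoc, or_left_comm]

lemma mem_prefixSets {S T : Set α} {l : List α} :
    T ∈ prefixSets S l ↔ ∃ l', l' <+: l ∧ T = S ∪ {v | v ∈ l'} := by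
  induction l generalizing S with
  | nil => simp [prefixSets_nil]
  | cons v l ih =>
    simp only [prefixSets_cons, List.mem_cons, ih, List.prefix_cons_iff]
    constructor
    · rintro (rfl | ⟨l', hl', rfl⟩)
      · exact ⟨[], .inl rfl, by simp⟩
      · exact ⟨v :: l', .inr ⟨l', rfl, hl'⟩, by ext; simp; tauto⟩
    · rintro ⟨_, rfl | ⟨l', rfl, hl'⟩, rfl⟩
      · exact .inl (by simp)
      · exact .inr ⟨l', hl', by ext; simp; tauto⟩

lemma subset_of_mem_prefixSets {S T : Set α} {l : List α} (hT : T ∈ prefixSets S l) : S ⊆ T := by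
  obtain ⟨l', -, rfl⟩ := mem_prefixSets.1 hT
  exact Set.subset_union_left

lemma pairwise_prefixSets (S : Set α) (l : List α) : (prefixSets S l).Pairwise (· ⊆ ·) := by
  induction l generalizing S with
  | nil => simp [prefixSets_nil]
  | cons v l ih =>
    rw [prefixSets_cons]
    exact .cons (fun T hT => (Set.subset_insert v S).trans (subset_of_mem_prefixSets hT)) (ih _)

lemma exists_rank_iff_exists_list [Finite α] {Q : Set α → Prop} :
    (∃ ρ : α → ℕ, ρ.Injective ∧ ∀ t, Q {v | ρ v < t}) ↔
      ∃ l : List α, (∀ v, v ∈ l) ∧ ∀ S ∈ prefixSets ∅ l, Q S := by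
  classical
  simp only [mem_prefixSets, Set.empty_union]
  constructor
  · rintro ⟨ρ, hρ, hQ⟩
    have key (t : ℕ) : ∃ l : List α, (∀ v, v ∈ l ↔ ρ v < t) ∧
        ∀ S, (∃ l', l' <+: l ∧ S = {v | v ∈ l'}) → Q S := by
      induction t with
      | zero => exact ⟨[], by simp, by simpa using hQ 0⟩
      | succ t ih =>
        obtain ⟨l, hl, hlQ⟩ := ih
        by_cases ht : ∃ v, ρ v = t
        · obtain ⟨v, rfl⟩ := ht
          have hlv (u : α) : u ∈ l ++ [v] ↔ ρ u < ρ v + 1 := by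
            rw [List.mem_append, List.mem_singleton, hl, Nat.lt_succ_iff_lt_or_eq, hρ.eq_iff]
          refine ⟨l ++ [v], hlv, ?_⟩
          rintro S ⟨l', hl', rfl⟩
          obtain rfl | hl' := List.prefix_concat_iff.1 hl'
          · simpa only [hlv] using hQ (ρ v + 1)
          · exact hlQ _ ⟨l', hl', rfl⟩
        · refine ⟨l, fun v => (hl v).trans ?_, hlQ⟩
          rw [Nat.lt_succ_iff_lt_or_eq, or_iff_left fun h => ht ⟨v, h⟩]
    obtain ⟨t, ht⟩ := (Set.finite_range ρ).bddAbove
    obtain ⟨l, hl, hlQ⟩ := key (t + 1)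
    exact ⟨l, fun v => (hl v).2 (Nat.lt_succ_of_le (ht ⟨v, rfl⟩)), hlQ⟩
  · rintro ⟨l, hl, hQ⟩
    refine ⟨fun v => l.idxOf v, fun u v h => (List.idxOf_inj (hl u)).1 h, fun t => ?_⟩
    exact hQ _ ⟨l.take t, List.take_prefix _ _, by simp only [List.mem_take_iff_idxOf_lt (hl _)]⟩

section Sum

variable {Q : Set α → Set β → Prop} {U : Set (α ⊕ β)}

lemma preimage_inl_insert_inl (v : α) :
    Sum.inl ⁻¹' (insert (Sum.inl v) U) = insert v (Sum.inl ⁻¹' U) := by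
  ext; simp

lemma preimage_inr_insert_inl (v : α) : Sum.inr ⁻¹' (insert (Sum.inl v) U) = Sum.inr ⁻¹' U := by
  ext; simp

lemma preimage_inl_insert_inr (v : β) : Sum.inl ⁻¹' (insert (Sum.inr v) U) = Sum.inl ⁻¹' U := by
  ext; simp

lemma preimage_inr_insert_inr (v : β) :
    Sum.inr ⁻¹' (insert (Sum.inr v) U) = insert v (Sum.inr ⁻¹' U) := by
  ext; simp

lemma merge_prefixSets_of_forall (l : List (α ⊕ β))
    (h : ∀ U' ∈ prefixSets U l, Q (Sum.inl ⁻¹' U') (Sum.inr ⁻¹' U')) :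
    Merge Q (prefixSets (Sum.inl ⁻¹' U) (l.filterMap Sum.getLeft?))
      (prefixSets (Sum.inr ⁻¹' U) (l.filterMap Sum.getRight?)) := by
  induction l generalizing U with
  | nil => exact .single (h U (by simp [prefixSets_nil]))
  | cons v l ih =>
    rw [prefixSets_cons, List.forall_mem_cons] at h
    have ih := ih h.2
    rcases v with v | v
    · rw [preimage_inl_insert_inl, preimage_inr_insert_inl] at ih
      simp only [List.filterMap_cons, Sum.getLeft?_inl, Sum.getRight?_inl, prefixSets_cons]
      obtain ⟨Ts, hTs⟩ := exists_prefixSets_eq_cons (Sum.inr ⁻¹' U) (l.filterMap Sum.getRight?)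
      rw [hTs] at ih ⊢
      exact .left h.1 ih
    · rw [preimage_inl_insert_inr, preimage_inr_insert_inr] at ih
      simp only [List.filterMap_cons, Sum.getLeft?_inr, Sum.getRight?_inr, prefixSets_cons]
      obtain ⟨Ss, hSs⟩ := exists_prefixSets_eq_cons (Sum.inl ⁻¹' U) (l.filterMap Sum.getLeft?)
      rw [hSs] at ih ⊢
      exact .right h.1 ih

lemma exists_list_of_merge_prefixSets {lA : List α} {lB : List β}
    (h : Merge Q (prefixSets (Sum.inl ⁻¹' U) lA) (prefixSets (Sum.inr ⁻¹' U) lB)) :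
    ∃ l : List (α ⊕ β), (∀ v ∈ lA, .inl v ∈ l) ∧ (∀ v ∈ lB, .inr v ∈ l) ∧
      ∀ U' ∈ prefixSets U l, Q (Sum.inl ⁻¹' U') (Sum.inr ⁻¹' U') := by
  generalize hA : prefixSets (Sum.inl ⁻¹' U) lA = as at h
  generalize hB : prefixSets (Sum.inr ⁻¹' U) lB = bs at h
  induction h generalizing U lA lB with
  | single hQ =>
    obtain rfl : lA = [] := by cases lA <;> simp_all [prefixSets_cons, prefixSets_ne_nil]
    obtain rfl : lB = [] := by cases lB <;> simp_all [prefixSets_cons, prefixSets_ne_nil]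
    exact ⟨[], by simp, by simp, by simp_all [prefixSets_nil]⟩
  | left hQ hm ih =>
    cases lA with
    | nil => exact absurd (List.cons.inj hA).2.symm hm.ne_nil_left
    | cons v lA =>
      obtain ⟨rfl, hA⟩ := List.cons.inj ((prefixSets_cons _ _ _).symm.trans hA)
      obtain ⟨l, hl, hlB, hlQ⟩ := ih (U := insert (.inl v) U) (lA := lA) (lB := lB)
        (by rwa [preimage_inl_insert_inl]) (by rwa [preimage_inr_insert_inl])
      obtain ⟨Ts, hTs⟩ := exists_prefixSets_eq_cons (Sum.inr ⁻¹' U) lB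
      obtain ⟨rfl, -⟩ := List.cons.inj (hTs.symm.trans hB)
      exact ⟨.inl v :: l, by simpa using fun u hu => .inr (hl u hu), fun u hu => .tail _ (hlB u hu),
        by simpa only [prefixSets_cons, List.forall_mem_cons] using ⟨hQ, hlQ⟩⟩
  | right hQ hm ih =>
    cases lB with
    | nil => exact absurd (List.cons.inj hB).2.symm hm.ne_nil_right
    | cons v lB =>
      obtain ⟨rfl, hB⟩ := List.cons.inj ((prefixSets_cons _ _ _).symm.trans hB)
      obtain ⟨l, hlA, hl, hlQ⟩ := ih (U := insert (.inr v) U) (lA := lA) (lB := lB)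
        (by rwa [preimage_inl_insert_inr]) (by rwa [preimage_inr_insert_inr])
      obtain ⟨Ss, hSs⟩ := exists_prefixSets_eq_cons (Sum.inl ⁻¹' U) lA
      obtain ⟨rfl, -⟩ := List.cons.inj (hSs.symm.trans hA)
      exact ⟨.inr v :: l, fun u hu => .tail _ (hlA u hu), by simpa using fun u hu => .inr (hl u hu),
        by simpa only [prefixSets_cons, List.forall_mem_cons] using ⟨hQ, hlQ⟩⟩

lemma exists_list_sum_iff_exists_merge :
    (∃ l : List (α ⊕ β), (∀ v, v ∈ l) ∧
        ∀ U ∈ prefixSets ∅ l, Q (Sum.inl ⁻¹' U) (Sum.inr ⁻¹' U)) ↔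
      ∃ (lA : List α) (lB : List β), (∀ v, v ∈ lA) ∧ (∀ v, v ∈ lB) ∧
        Merge Q (prefixSets ∅ lA) (prefixSets ∅ lB) := by
  constructor
  · rintro ⟨l, hl, hQ⟩
    refine ⟨_, _, fun v => ?_, fun v => ?_, merge_prefixSets_of_forall l hQ⟩ <;> simp [hl]
  · rintro ⟨lA, lB, hlA, hlB, hm⟩
    obtain ⟨l, hA, hB, hQ⟩ := exists_list_of_merge_prefixSets (U := ∅) hm
    exact ⟨l, fun v => v.rec (fun v => hA v (hlA v)) fun v => hB v (hlB v), hQ⟩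

end Sum

end Orderings

namespace Multigraph

section Cutwidth

variable {G H : Multigraph} {k w : ℕ}

/-- The edges with exactly one end in `S`. -/
def cutEdges (G : Multigraph) (S : Set G.V) : Set G.E :=
  {e | ¬ ((G.ends e).1 ∈ S ↔ (G.ends e).2 ∈ S)}

/-- The number of edges outside `F` with exactly one end in `S`. -/
noncomputable def cutSize (G : Multigraph) (F : Set G.E) (S : Set G.V) : ℕ :=
  (G.cutEdges S \ F).ncard

lemma mem_cutEdges {S : Set G.V} {e : G.E} :
    e ∈ G.cutEdges S ↔ ¬ ((G.ends e).1 ∈ S ↔ (G.ends e).2 ∈ S) := Iff.rfl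

lemma delta_eq_cutSize_empty (S : Set G.V) : G.delta S = G.cutSize ∅ S := by
  rw [cutSize, Set.sdiff_empty, delta, cutEdges]

lemma cutEdges_empty : G.cutEdges ∅ = ∅ := by simp [cutEdges]

lemma cutEdges_univ : G.cutEdges Set.univ = ∅ := by simp [cutEdges]

lemma cutSize_deleteEdges (F : Set G.E) (F' : Set (G.deleteEdges F).E) (S : Set G.V) :
    (G.deleteEdges F).cutSize F' S = G.cutSize (F ∪ Subtype.val '' F') S := by
  rw [cutSize, ← Set.ncard_image_of_injective _ Subtype.val_injective, cutSize]
  congr 1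
  ext e
  by_cases he : e ∈ F
  · simp [he]
  · have hcut : ∀ h : e ∉ F, (⟨e, h⟩ ∈ (G.deleteEdges F).cutEdges S) = (e ∈ G.cutEdges S) :=
      fun _ => rfl
    simp [he, hcut]

lemma delta_deleteEdges (F : Set G.E) (S : Set G.V) :
    (G.deleteEdges F).delta S = G.cutSize F S := by
  rw [delta_eq_cutSize_empty, cutSize_deleteEdges, Set.image_empty, Set.union_empty]

lemma cutwidth_le_iff :
    G.cutwidth ≤ k ↔ ∃ ρ : G.V → ℕ, ρ.Injective ∧ ∀ t, G.delta {v | ρ v < t} ≤ k := by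
  constructor
  · intro h
    obtain ⟨ρ₀, hρ₀⟩ := exists_injective_nat G.V
    obtain ⟨ρ, hρ, hcw⟩ := Nat.sInf_mem (⟨_, ρ₀, hρ₀, rfl⟩ :
      {w | ∃ ρ : G.V → ℕ, ρ.Injective ∧ G.cwOrd ρ = w}.Nonempty)
    refine ⟨ρ, hρ, fun t => ?_⟩
    obtain hempty | hne := Set.eq_empty_or_nonempty {v | ρ v < t}
    · simp [hempty, delta_eq_cutSize_empty, cutSize, cutEdges_empty]
    obtain ⟨v, hv, hmax⟩ := Set.exists_max_image _ ρ (Set.toFinite _) hne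
    have hset : {u | ρ u < t} = {u | ρ u ≤ ρ v} :=
      Set.ext fun u => ⟨hmax u, fun hu => lt_of_le_of_lt (show ρ u ≤ ρ v from hu) hv⟩
    have hbdd : BddAbove {w | ∃ v : G.V, w = G.delta {u | ρ u ≤ ρ v}} := by
      refine (Set.Finite.subset (Set.finite_range fun v => G.delta {u | ρ u ≤ ρ v}) ?_).bddAbove
      rintro _ ⟨v, rfl⟩
      exact ⟨v, rfl⟩
    exact (hset ▸ le_csSup hbdd ⟨v, rfl⟩ : _ ≤ G.cwOrd ρ).trans (hcw.trans_le h)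
  · rintro ⟨ρ, hρ, hk⟩
    have hle : G.cutwidth ≤ G.cwOrd ρ := Nat.sInf_le ⟨ρ, hρ, rfl⟩
    refine hle.trans (csSup_le' ?_)
    rintro _ ⟨v, rfl⟩
    simpa only [Nat.lt_succ_iff] using hk (ρ v + 1)

lemma cutwidth_le_iff_exists_list :
    G.cutwidth ≤ k ↔ ∃ l : List G.V, (∀ v, v ∈ l) ∧ ∀ S ∈ prefixSets ∅ l, G.delta S ≤ k :=
  cutwidth_le_iff.trans (exists_rank_iff_exists_list (Q := fun S => G.delta S ≤ k))

lemma cutwidth_deleteEdges_le_iff {F : Set G.E} : (G.deleteEdges F).cutwidth ≤ k ↔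
    ∃ ρ : G.V → ℕ, ρ.Injective ∧ ∀ t, G.cutSize F {v | ρ v < t} ≤ k := by
  simp only [← delta_deleteEdges]
  exact cutwidth_le_iff

lemma cutwidth_deleteEdges_univ : (G.deleteEdges Set.univ).cutwidth ≤ k := by
  obtain ⟨ρ, hρ⟩ := exists_injective_nat G.V
  exact cutwidth_deleteEdges_le_iff.2 ⟨ρ, hρ, by simp [cutSize]⟩

lemma dcw_le_iff : dcw k G ≤ w ↔ ∃ F : Set G.E, F.ncard ≤ w ∧ (G.deleteEdges F).cutwidth ≤ k := by
  constructor
  · intro h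
    obtain ⟨F, hF, hcard⟩ := Nat.sInf_mem (⟨_, Set.univ, cutwidth_deleteEdges_univ, rfl⟩ :
      {w | ∃ F : Set G.E, (G.deleteEdges F).cutwidth ≤ k ∧ F.ncard = w}.Nonempty)
    exact ⟨F, hcard.trans_le h, hF⟩
  · rintro ⟨F, hcard, hF⟩
    have hle : dcw k G ≤ F.ncard := Nat.sInf_le ⟨F, hF, rfl⟩
    exact hle.trans hcard

lemma dcw_le_iff_exists_list : dcw k G ≤ w ↔ ∃ F : Set G.E, F.ncard ≤ w ∧
    ∃ l : List G.V, (∀ v, v ∈ l) ∧ ∀ S ∈ prefixSets ∅ l, G.cutSize F S ≤ k := by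
  simp only [dcw_le_iff, cutwidth_le_iff_exists_list, delta_deleteEdges]

lemma dcw_le_card_edges : dcw k G ≤ Nat.card G.E :=
  dcw_le_iff.2 ⟨Set.univ, (Set.ncard_univ _).le, cutwidth_deleteEdges_univ⟩

lemma dcw_le_dcw_deleteEdges_add_ncard (F : Set G.E) :
    dcw k G ≤ dcw k (G.deleteEdges F) + F.ncard := by
  obtain ⟨F', hF', hcw⟩ := dcw_le_iff.1 (le_refl (dcw k (G.deleteEdges F)))
  obtain ⟨ρ, hρ, hk⟩ := cutwidth_deleteEdges_le_iff.1 hcw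
  refine dcw_le_iff.2
    ⟨F ∪ Subtype.val '' F', ?_, cutwidth_deleteEdges_le_iff.2 ⟨ρ, hρ, fun t => ?_⟩⟩
  · refine (Set.ncard_union_le _ _).trans ?_
    rw [Set.ncard_image_of_injective _ Subtype.val_injective, add_comm]
    gcongr
  · rw [← cutSize_deleteEdges]
    exact hk t

lemma dcw_le_of_equiv_of_surjective (fv : H.V ≃ G.V) (fe : H.E → G.E)
    (hfe : Function.Surjective fe)
    (hends : ∀ e, G.ends (fe e) = (fv (H.ends e).1, fv (H.ends e).2) ∨
      G.ends (fe e) = (fv (H.ends e).2, fv (H.ends e).1)) :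
    dcw k G ≤ dcw k H := by
  obtain ⟨F, hF, hcw⟩ := dcw_le_iff.1 (le_refl (dcw k H))
  obtain ⟨ρ, hρ, hk⟩ := cutwidth_deleteEdges_le_iff.1 hcw
  refine dcw_le_iff.2 ⟨fe '' F, (Set.ncard_image_le).trans hF,
    cutwidth_deleteEdges_le_iff.2 ⟨ρ ∘ fv.symm, hρ.comp fv.symm.injective, fun t => ?_⟩⟩
  have hsub : G.cutEdges {v | (ρ ∘ fv.symm) v < t} \ fe '' F ⊆
      fe '' (H.cutEdges {v | ρ v < t} \ F) := by
    rintro e ⟨he, heF⟩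
    obtain ⟨e, rfl⟩ := hfe e
    refine ⟨e, ⟨?_, fun h => heF ⟨e, h, rfl⟩⟩, rfl⟩
    rcases hends e with h | h <;> simp_all [mem_cutEdges, iff_comm]
  exact (Set.ncard_le_ncard hsub).trans ((Set.ncard_image_le).trans (hk t))

lemma cutwidth_induce_le {F : Set G.E} {X : Set G.V}
    (hF : ∀ e ∈ F, ¬ ((G.ends e).1 ∈ X ∧ (G.ends e).2 ∈ X))
    (h : (G.deleteEdges F).cutwidth ≤ k) : (G.induce X).cutwidth ≤ k := by
  obtain ⟨ρ, hρ, hk⟩ := cutwidth_deleteEdges_le_iff.1 h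
  refine cutwidth_le_iff.2 ⟨fun v => ρ v.1, hρ.comp Subtype.val_injective, fun t => ?_⟩
  refine le_trans ?_ (hk t)
  rw [delta, ← Set.ncard_image_of_injective _ Subtype.val_injective]
  refine Set.ncard_le_ncard ?_
  rintro _ ⟨e, he, rfl⟩
  exact ⟨he, fun heF => hF e.1 heF e.2⟩

end Cutwidth

end Multigraph

namespace Multigraph

section Join

variable {m k w : ℕ} {A A' B : Multigraph} {x : Fin m → A.V} {x' : Fin m → A'.V} {y : Fin m → B.V}

lemma ncard_sum {α β : Type*} [Finite α] [Finite β] (s : Set (α ⊕ β)) :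
    s.ncard = (Sum.inl ⁻¹' s).ncard + (Sum.inr ⁻¹' s).ncard := by
  rw [← Set.ncard_image_of_injective (Sum.inl ⁻¹' s) (Sum.inl_injective (β := β)),
    ← Set.ncard_image_of_injective (Sum.inr ⁻¹' s) (Sum.inr_injective (α := α)),
    ← Set.ncard_union_eq, Set.image_preimage_inl_union_image_preimage_inr]
  exact Set.isCompl_range_inl_range_inr.disjoint.mono (Set.image_subset_range _ _)
    (Set.image_subset_range _ _)

/-- The set of edges of `A.join B x y` consisting of the edges in `FA` and `FB` and of the
connecting edges with index in `R`. -/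
def joinEdges (FA : Set A.E) (FB : Set B.E) (R : Set (Fin m)) : Set ((A.E ⊕ B.E) ⊕ Fin m) :=
  {e | Sum.elim (Sum.elim (· ∈ FA) (· ∈ FB)) (· ∈ R) e}

lemma exists_eq_joinEdges (F : Set ((A.E ⊕ B.E) ⊕ Fin m)) :
    ∃ FA FB R, F = joinEdges FA FB R :=
  ⟨{e | .inl (.inl e) ∈ F}, {e | .inl (.inr e) ∈ F}, {p | .inr p ∈ F}, by
    ext ((e | e) | p) <;> simp [joinEdges]⟩

lemma ncard_joinEdges (FA : Set A.E) (FB : Set B.E) (R : Set (Fin m)) :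
    (joinEdges FA FB R).ncard = FA.ncard + FB.ncard + R.ncard := by
  rw [ncard_sum, ncard_sum]
  rfl

lemma cutSize_join (FA : Set A.E) (FB : Set B.E) (R : Set (Fin m)) (U : Set (A.V ⊕ B.V)) :
    (A.join B x y).cutSize (joinEdges FA FB R) U =
      A.cutSize FA (Sum.inl ⁻¹' U) + B.cutSize FB (Sum.inr ⁻¹' U) +
        {p | p ∉ R ∧ ¬ (x p ∈ Sum.inl ⁻¹' U ↔ y p ∈ Sum.inr ⁻¹' U)}.ncard := by
  have hcut : (A.join B x y).cutEdges U \ joinEdges FA FB R =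
      joinEdges (A.cutEdges (Sum.inl ⁻¹' U) \ FA) (B.cutEdges (Sum.inr ⁻¹' U) \ FB)
        {p | p ∉ R ∧ ¬ (x p ∈ Sum.inl ⁻¹' U ↔ y p ∈ Sum.inr ⁻¹' U)} := by
    ext ((e | e) | p)
    · rfl
    · rfl
    · exact and_comm
  rw [cutSize, hcut, ncard_joinEdges, cutSize, cutSize]

lemma dcw_join_le_iff : dcw k (A.join B x y) ≤ w ↔
    ∃ (FA : Set A.E) (FB : Set B.E) (R : Set (Fin m)), FA.ncard + FB.ncard + R.ncard ≤ w ∧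
      ∃ (lA : List A.V) (lB : List B.V), (∀ v, v ∈ lA) ∧ (∀ v, v ∈ lB) ∧
        Merge (fun S T => A.cutSize FA S + B.cutSize FB T +
          {p | p ∉ R ∧ ¬ (x p ∈ S ↔ y p ∈ T)}.ncard ≤ k) (prefixSets ∅ lA) (prefixSets ∅ lB) := by
  rw [dcw_le_iff_exists_list]
  constructor
  · rintro ⟨F, hF, l, hl, hk⟩
    obtain ⟨FA, FB, R, rfl⟩ := exists_eq_joinEdges F
    exact ⟨FA, FB, R, (ncard_joinEdges FA FB R).symm.trans_le hF,
      exists_list_sum_iff_exists_merge.1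
        ⟨l, hl, fun U hU => (cutSize_join FA FB R U).symm.trans_le (hk U hU)⟩⟩
  · rintro ⟨FA, FB, R, hF, h⟩
    obtain ⟨l, hl, hk⟩ := exists_list_sum_iff_exists_merge.2 h
    exact ⟨joinEdges FA FB R, (ncard_joinEdges FA FB R).trans_le hF, l, hl,
      fun U hU => (cutSize_join FA FB R U).trans_le (hk U hU)⟩

open Classical in
/-- The letter of a vertex set `S` of a graph with boundary `x`: the boundary indices inside `S`
and the number of edges outside `F` leaving `S`. -/
noncomputable def letter (x : Fin m → A.V) (F : Set A.E) (S : Set A.V) : Letter m :=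
  ⟨Finset.univ.filter (x · ∈ S), A.cutSize F S⟩

/-- The cut profile of an ordering of a graph with boundary `x`: the letters of its prefixes. -/
noncomputable def profile (x : Fin m → A.V) (F : Set A.E) (l : List A.V) : List (Letter m) :=
  (prefixSets ∅ l).map (letter x F)

/-- The letters that may face the prefix `T` of `B` in an ordering of a join of width at most `k`,
when `F` and the connecting edges `R` are deleted. -/
def facingLetters (k : ℕ) (y : Fin m → B.V) (F : Set B.E) (R : Set (Fin m)) (T : Set B.V) :
    LowerSet (Letter m) where
  carrier := {a | a.2 + B.cutSize F T + {p | p ∉ R ∧ ¬ (p ∈ a.1 ↔ y p ∈ T)}.ncard ≤ k}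
  lower' := by
    rintro _ _ ⟨L, a, b, hba⟩ (h : _ + _ + _ ≤ k)
    exact (by gcongr : _ + _ + _ ≤ _ + _ + _).trans h

open Classical in
lemma merge_profile_iff {FA : Set A.E} {FB : Set B.E} {R : Set (Fin m)} {lA : List A.V}
    {lB : List B.V} :
    Merge (· ∈ ·) (profile x FA lA) ((prefixSets ∅ lB).map (facingLetters k y FB R)) ↔
      Merge (fun S T => A.cutSize FA S + B.cutSize FB T +
        {p | p ∉ R ∧ ¬ (x p ∈ S ↔ y p ∈ T)}.ncard ≤ k) (prefixSets ∅ lA) (prefixSets ∅ lB) := by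
  rw [profile, Merge.map_iff]
  refine iff_of_eq (congrArg (Merge · _ _) ?_)
  ext S T
  change _ + _ + Set.ncard {p | p ∉ R ∧ ¬ (p ∈ Finset.univ.filter _ ↔ _)} ≤ k ↔ _
  simp only [letter, Finset.mem_filter_univ]

/-- The words over `Letter m` to which profiles of width at most `k` are reduced. -/
def boundedWords (m k : ℕ) : Set (List (Letter m)) :=
  {ws | ws.length ≤ (m + 1) * (2 * (k + 1) + 1) ∧ ∀ a ∈ ws, a.2 ≤ k}

lemma finite_boundedWords (m k : ℕ) : (boundedWords m k).Finite := by
  have hletters : Finite {a : Letter m // a.2 ≤ k} :=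
    Finite.of_injective (β := Finset (Fin m) × Fin (k + 1))
      (fun a => (a.1.1, ⟨a.1.2, Nat.lt_succ_of_le a.2⟩)) (by
        rintro ⟨⟨L, a⟩, ha⟩ ⟨⟨L', b⟩, hb⟩ h
        simpa using h)
  refine ((List.finite_length_le {a : Letter m // a.2 ≤ k} ((m + 1) * (2 * (k + 1) + 1))).image
    (List.map Subtype.val)).subset ?_
  rintro ws ⟨hlen, hk⟩
  exact ⟨ws.attachWith _ hk, by simpa using hlen, by simp⟩

instance (m k : ℕ) : Finite (boundedWords m k) := (finite_boundedWords m k).to_subtype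

open Classical in
lemma exists_boundedWord {F : Set A.E} {l : List A.V}
    (hk : ∀ S ∈ prefixSets ∅ l, A.cutSize F S ≤ k) :
    ∃ ws : boundedWords m k, MergeEquiv (profile x F l) ws := by
  have hletters : ∀ a ∈ profile x F l, a.2 ≤ k := by
    simpa only [profile, List.forall_mem_map, letter] using hk
  have hmono : (profile x F l).Pairwise fun a b => a.1 ⊆ b.1 := by
    refine List.pairwise_map.2 ((pairwise_prefixSets ∅ l).imp fun hST => ?_)
    exact Finset.monotone_filter_right _ fun _ _ h => hST h
  obtain ⟨ws, hsub, hlen, hws⟩ := Letter.exists_short k _ hmono hletters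
  exact ⟨⟨ws, hlen, fun a ha => hletters a (hsub ha)⟩, hws⟩

/-- The signature of a graph with boundary `x`: the reduced profiles of its orderings, together with
the number of deleted edges, for all deletions of at most `m` edges. Deleting more than `m` edges is
never useful in a join, as one can delete the `m` connecting edges instead. -/
def signature (k : ℕ) (x : Fin m → A.V) : Set (Fin (m + 1) × boundedWords m k) :=
  {t | ∃ F : Set A.E, F.ncard = t.1 ∧ ∃ l : List A.V, (∀ v, v ∈ l) ∧ MergeEquiv (profile x F l) t.2}

lemma exists_mergeEquiv_profile (hsig : signature k x' = signature k x) {F' : Set A'.E}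
    (hF' : F'.ncard ≤ m) {l' : List A'.V} (hl' : ∀ v, v ∈ l')
    (hk : ∀ S ∈ prefixSets ∅ l', A'.cutSize F' S ≤ k) :
    ∃ F : Set A.E, F.ncard = F'.ncard ∧ ∃ l : List A.V, (∀ v, v ∈ l) ∧
      MergeEquiv (profile x' F' l') (profile x F l) := by
  obtain ⟨ws, hws⟩ := exists_boundedWord (x := x') hk
  have hmem : (⟨F'.ncard, Nat.lt_succ_of_le hF'⟩, ws) ∈ signature k x' := ⟨F', rfl, l', hl', hws⟩
  rw [hsig] at hmem
  obtain ⟨F, hF, l, hl, hws'⟩ := hmem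
  exact ⟨F, hF, l, hl, hws.trans hws'.symm⟩

lemma merge_prefixSets_of_cutSize_le {FA : Set A.E} {FB : Set B.E} {lA : List A.V} {lB : List B.V}
    (hlA : ∀ v, v ∈ lA) (hA : ∀ S ∈ prefixSets ∅ lA, A.cutSize FA S ≤ k)
    (hB : ∀ T ∈ prefixSets ∅ lB, B.cutSize FB T ≤ k) :
    Merge (fun S T => A.cutSize FA S + B.cutSize FB T ≤ k) (prefixSets ∅ lA) (prefixSets ∅ lB) := by
  obtain ⟨Ss, hSs⟩ := exists_prefixSets_eq_concat ∅ lA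
  obtain ⟨Ts, hTs⟩ := exists_prefixSets_eq_cons ∅ lB
  have hlast : (∅ ∪ {v | v ∈ lA} : Set A.V) = Set.univ := by simp [hlA]
  rw [hlast] at hSs
  rw [hSs] at hA ⊢
  rw [hTs] at hB ⊢
  refine Merge.append_left (fun S hS => ?_)
    (Merge.singleton_left_iff.2 ⟨List.cons_ne_nil _ _, fun T hT => ?_⟩)
  · simpa [cutSize, cutEdges_empty] using hA S (List.mem_append_left _ hS)
  · simpa [cutSize, cutEdges_univ] using hB T hT

lemma dcw_join_le_of_signature_eq (hsig : signature k x' = signature k x) (hA : A.cutwidth ≤ k)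
    (h : dcw k (A'.join B x' y) ≤ w) : dcw k (A.join B x y) ≤ w := by
  obtain ⟨FA', FB, R, hw, lA', lB, hlA', hlB, hmerge⟩ := dcw_join_le_iff.1 h
  obtain hsmall | hlarge := le_or_gt FA'.ncard m
  · have hk : ∀ S ∈ prefixSets ∅ lA', A'.cutSize FA' S ≤ k := fun S hS => by
      obtain ⟨T, -, hT⟩ := hmerge.exists_right S hS
      omega
    obtain ⟨FA, hFA, lA, hlA, hequiv⟩ := exists_mergeEquiv_profile hsig hsmall hlA' hk
    refine dcw_join_le_iff.2 ⟨FA, FB, R, hFA ▸ hw, lA, lB, hlA, hlB, ?_⟩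
    exact merge_profile_iff.1 ((hequiv _).1 (merge_profile_iff.2 hmerge))
  · have hB : ∀ T ∈ prefixSets ∅ lB, B.cutSize FB T ≤ k := fun T hT => by
      obtain ⟨S, -, hS⟩ := hmerge.exists_left T hT
      omega
    obtain ⟨lA, hlA, hk⟩ := cutwidth_le_iff_exists_list.1 hA
    refine dcw_join_le_iff.2 ⟨∅, FB, Set.univ, ?_, lA, lB, hlA, hlB, ?_⟩
    · simp only [Set.ncard_empty, Set.ncard_univ, Nat.card_fin]
      omega
    · simpa using merge_prefixSets_of_cutSize_le hlA
        (fun S hS => (delta_eq_cutSize_empty S).symm.trans_le (hk S hS)) hB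

end Join

end Multigraph

namespace Multigraph

/-- The edge `e` joins `u` and `v`. -/
def Joins (G : Multigraph) (e : G.E) (u v : G.V) : Prop :=
  G.ends e = (u, v) ∨ G.ends e = (v, u)

section Walks

variable {G : Multigraph} {e : G.E} {u v : G.V} {X : Set G.V}

lemma joins_ends (e : G.E) : G.Joins e (G.ends e).1 (G.ends e).2 := Or.inl rfl

lemma Joins.symm (h : G.Joins e u v) : G.Joins e v u := Or.symm h

lemma Joins.ne (h : G.Joins e u v) : u ≠ v := by
  have := G.loopless e
  rcases h with h | h <;> simp_all [eq_comm]

lemma Joins.mem_cutEdges_iff (h : G.Joins e u v) : e ∈ G.cutEdges X ↔ ¬ (u ∈ X ↔ v ∈ X) := by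
  rcases h with h | h <;> simp [mem_cutEdges, h, iff_comm]

lemma exists_joins_of_mem_cutEdges (h : e ∈ G.cutEdges X) : ∃ u ∈ X, ∃ v ∉ X, G.Joins e u v := by
  by_cases h₁ : (G.ends e).1 ∈ X
  · exact ⟨_, h₁, _, fun h₂ => h (iff_of_true h₁ h₂), joins_ends e⟩
  · exact ⟨_, by_contra fun h₂ => h (iff_of_false h₁ h₂), _, h₁, (joins_ends e).symm⟩

namespace Walk

/-- The edges of a walk, each with the vertex from which it is traversed. -/
def darts : ∀ {u v : G.V}, G.Walk u v → List (G.E × G.V)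
  | _, _, .nil _ => []
  | u, _, .cons e _ p => (e, u) :: p.darts

lemma map_fst_darts (p : G.Walk u v) : p.darts.map Prod.fst = p.edges := by
  induction p with
  | nil => rfl
  | cons e _ _ ih => exact congrArg (e :: ·) ih

lemma start_mem_support (p : G.Walk u v) : u ∈ p.support := by
  cases p <;> exact List.mem_cons_self

lemma exists_suffix (p : G.Walk u v) {x : G.V} (hx : x ∈ p.support) :
    ∃ q : G.Walk x v, q.support <:+ p.support ∧ q.darts <:+ p.darts := by
  induction p with
  | nil w =>
    obtain rfl := List.mem_singleton.1 hx
    exact ⟨.nil x, List.suffix_rfl, List.suffix_rfl⟩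
  | cons e h p ih =>
    obtain rfl | hx := List.mem_cons.1 hx
    · exact ⟨.cons e h p, List.suffix_rfl, List.suffix_rfl⟩
    · obtain ⟨q, hsupp, hdarts⟩ := ih hx
      exact ⟨q, hsupp.trans (List.suffix_cons _ _), hdarts.trans (List.suffix_cons _ _)⟩

lemma exists_path (p : G.Walk u v) :
    ∃ q : G.Walk u v, q.support.Nodup ∧ q.support ⊆ p.support ∧ q.darts ⊆ p.darts := by
  induction p with
  | nil w => exact ⟨.nil w, List.nodup_singleton w, List.Subset.refl _, List.Subset.refl _⟩
  | @cons u v w e h p ih =>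
    obtain ⟨q, hnodup, hsupp, hdarts⟩ := ih
    by_cases hu : u ∈ q.support
    · obtain ⟨q', hsupp', hdarts'⟩ := q.exists_suffix hu
      exact ⟨q', hnodup.sublist hsupp'.sublist,
        fun _ hx => .tail _ (hsupp (hsupp'.subset hx)),
        fun _ hd => .tail _ (hdarts (hdarts'.subset hd))⟩
    · exact ⟨.cons e h q, List.nodup_cons.2 ⟨hu, hnodup⟩, List.cons_subset_cons _ hsupp,
        List.cons_subset_cons _ hdarts⟩

lemma mem_support_of_joins (p : G.Walk u v) {x y : G.V} (he : e ∈ p.edges)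
    (hxy : G.Joins e x y) : x ∈ p.support := by
  induction p with
  | nil => cases he
  | cons e' h p ih =>
    obtain rfl | he := List.mem_cons.1 he
    · have := p.start_mem_support
      rcases h with h | h <;> rcases hxy with h' | h' <;> simp_all [support]
    · exact .tail _ (ih he)

lemma nodup_edges (p : G.Walk u v) (hp : p.support.Nodup) : p.edges.Nodup := by
  induction p with
  | nil => exact List.nodup_nil
  | cons e h p ih =>
    obtain ⟨hu, hp⟩ := List.nodup_cons.1 hp
    exact List.nodup_cons.2 ⟨fun he => hu (p.mem_support_of_joins he h), ih hp⟩

lemma exists_mem_cutEdges (p : G.Walk u v) (hu : u ∈ X) (hv : v ∉ X) :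
    ∃ e ∈ p.edges, e ∈ G.cutEdges X := by
  induction p with
  | nil => exact absurd hu hv
  | @cons u w v e h p ih =>
    by_cases hw : w ∈ X
    · exact (ih hw hv).imp fun _ h => ⟨.tail _ h.1, h.2⟩
    · exact ⟨e, .head _, (Joins.mem_cutEdges_iff h).2 fun h => hw (h.1 hu)⟩

end Walk

end Walks

section Menger

variable {G : Multigraph} {e : G.E} {u v : G.V} {A B X : Set G.V}

noncomputable instance : Fintype G.E := Fintype.ofFinite _

open Classical in
/-- The sign of an edge `e` traversed from its end `u`, relative to the orientation `G.ends e`. -/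
noncomputable def orient (G : Multigraph) (e : G.E) (u : G.V) : ℤ :=
  if (G.ends e).1 = u then 1 else -1

lemma orient_mul_self (e : G.E) (u : G.V) : G.orient e u * G.orient e u = 1 := by
  unfold orient
  split_ifs <;> rfl

lemma Joins.indicator_sub_indicator (h : G.Joins e u v) (X : Set G.V) :
    X.indicator 1 (G.ends e).1 - X.indicator 1 (G.ends e).2 =
      G.orient e u * (X.indicator 1 u - X.indicator 1 v) := by
  have hne := h.ne
  rcases h with h | h <;> simp [orient, h, hne.symm]

/-- The net amount of a flow `f`, directed along `G.ends`, which leaves `X`. -/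
noncomputable def netFlow (X : Set G.V) : (G.E → ℤ) →+ ℤ where
  toFun f := ∑ e, f e * (X.indicator 1 (G.ends e).1 - X.indicator 1 (G.ends e).2)
  map_zero' := by simp
  map_add' f g := by simp only [Pi.add_apply, add_mul, Finset.sum_add_distrib]

lemma netFlow_le_mul_delta {f : G.E → ℤ} {c : ℤ}
    (hf : ∀ e u v, G.Joins e u v → u ∈ X → v ∉ X → G.orient e u * f e ≤ c) :
    netFlow X f ≤ c * G.delta X := by
  classical
  have hterm : ∀ e, f e * (X.indicator 1 (G.ends e).1 - X.indicator 1 (G.ends e).2) ≤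
      if e ∈ G.cutEdges X then c else 0 := by
    intro e
    split_ifs with he
    · obtain ⟨u, hu, v, hv, h⟩ := exists_joins_of_mem_cutEdges he
      simpa [h.indicator_sub_indicator, hu, hv, mul_comm] using hf e u v h hu hv
    · rw [mem_cutEdges, not_not] at he
      simp [Set.indicator, he]
  refine (Finset.sum_le_sum fun e _ => hterm e).trans_eq ?_
  rw [← Finset.sum_filter, Finset.sum_const, nsmul_eq_mul, mul_comm, delta_eq_cutSize_empty,
    cutSize, Set.sdiff_empty, Set.ncard_eq_toFinset_card', Set.filter_mem_univ_eq_toFinset]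

namespace Walk

open Classical in
/-- The flow sending one unit along a walk. -/
noncomputable def flow : ∀ {u v : G.V}, G.Walk u v → G.E → ℤ
  | _, _, .nil _ => 0
  | u, _, .cons e _ p => Pi.single e (G.orient e u) + p.flow

lemma netFlow_flow (p : G.Walk u v) (X : Set G.V) :
    netFlow X p.flow = X.indicator 1 u - X.indicator 1 v := by
  classical
  induction p with
  | nil => simp [flow]
  | @cons u w v e h p ih =>
    have hsingle : netFlow X (Pi.single e (G.orient e u)) = X.indicator 1 u - X.indicator 1 w := by
      simp [netFlow, Pi.single_apply, Joins.indicator_sub_indicator h, ← mul_assoc, orient_mul_self]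
    rw [flow, map_add, hsingle, ih]
    ring

lemma flow_eq_zero (p : G.Walk u v) (he : e ∉ p.edges) : p.flow e = 0 := by
  induction p with
  | nil => rfl
  | cons e' h p ih =>
    obtain ⟨hne, he⟩ := not_or.1 (mt List.mem_cons.2 he)
    simp [flow, hne, ih he]

lemma exists_flow_eq_orient (p : G.Walk u v) (hp : p.edges.Nodup) (he : e ∈ p.edges) :
    ∃ x, (e, x) ∈ p.darts ∧ p.flow e = G.orient e x := by
  induction p with
  | nil => cases he
  | @cons u w v e' h p ih =>
    obtain ⟨he', hp⟩ := List.nodup_cons.1 hp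
    obtain rfl | he := List.mem_cons.1 he
    · exact ⟨u, .head _, by simp [flow, p.flow_eq_zero he']⟩
    · obtain ⟨x, hx, hflow⟩ := ih hp he
      have hne : e ≠ e' := fun h => he' (h ▸ he)
      exact ⟨x, .tail _ hx, by simp [flow, hne, hflow]⟩

end Walk

/-- A path from `A` to the complement of `B`. -/
structure CrossingPath (G : Multigraph) (A B : Set G.V) where
  source : G.V
  target : G.V
  walk : G.Walk source target
  source_mem : source ∈ A
  target_notMem : target ∉ B
  nodup_support : walk.support.Nodup

lemma CrossingPath.netFlow_flow (p : G.CrossingPath A B) (hA : A ⊆ X) (hB : X ⊆ B) :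
    netFlow X p.walk.flow = 1 := by
  have htarget : p.target ∉ X := fun h => p.target_notMem (hB h)
  simp [p.walk.netFlow_flow, hA p.source_mem, htarget]

lemma CrossingPath.flow_cases (p : G.CrossingPath A B) (e : G.E) :
    e ∉ p.walk.edges ∧ p.walk.flow e = 0 ∨
      e ∈ p.walk.edges ∧ ∃ x, (e, x) ∈ p.walk.darts ∧ p.walk.flow e = G.orient e x := by
  by_cases he : e ∈ p.walk.edges
  · exact .inr ⟨he, p.walk.exists_flow_eq_orient (p.walk.nodup_edges p.nodup_support) he⟩
  · exact .inl ⟨he, p.walk.flow_eq_zero he⟩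

lemma exists_crossingPath_or_barrier (r : G.E → G.V → Prop) (A B : Set G.V) :
    (∃ p : G.CrossingPath A B, ∀ d ∈ p.walk.darts, r d.1 d.2) ∨
      ∃ X, A ⊆ X ∧ X ⊆ B ∧ ∀ e u v, G.Joins e u v → u ∈ X → v ∉ X → ¬ r e u := by
  by_cases h : ∃ a ∈ A, ∃ b ∉ B, ∃ p : G.Walk a b, ∀ d ∈ p.darts, r d.1 d.2
  · obtain ⟨a, ha, b, hb, p, hp⟩ := h
    obtain ⟨q, hq, -, hdarts⟩ := p.exists_path
    exact .inl ⟨⟨a, b, q, ha, hb, hq⟩, fun d hd => hp d (hdarts hd)⟩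
  · refine .inr ⟨{v | ¬ ∃ b ∉ B, ∃ p : G.Walk v b, ∀ d ∈ p.darts, r d.1 d.2}, ?_, ?_, ?_⟩
    · exact fun a ha hreach => h ⟨a, ha, hreach⟩
    · exact fun v hv => by_contra fun hvB => hv ⟨v, hvB, .nil v, by simp [Walk.darts]⟩
    · intro e u v he hu hv hr
      obtain ⟨b, hb, p, hp⟩ := not_not.1 hv
      exact hu ⟨b, hb, .cons e he p, List.forall_mem_cons.2 ⟨hr, hp⟩⟩

/-- An integral flow of value `m` from `A` to the complement of `B`, with unit edge capacities.
Conservation is expressed through the cuts separating `A` from the complement of `B`. -/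
structure IsFlow (A B : Set G.V) (f : G.E → ℤ) (m : ℤ) : Prop where
  abs_le_one : ∀ e, |f e| ≤ 1
  netFlow_eq : ∀ X, A ⊆ X → X ⊆ B → netFlow X f = m

lemma exists_isFlow {m : ℕ} (hm : ∀ X, A ⊆ X → X ⊆ B → m ≤ G.delta X) : ∃ f, IsFlow A B f m := by
  induction m with
  | zero => exact ⟨0, by simp, by simp⟩
  | succ m ih =>
    obtain ⟨f, hf⟩ := ih fun X hA hB => (Nat.le_succ m).trans (hm X hA hB)
    obtain ⟨p, hp⟩ | ⟨X, hA, hB, hX⟩ :=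
      exists_crossingPath_or_barrier (fun e u => G.orient e u * f e ≤ 0) A B
    · refine ⟨f + p.walk.flow, fun e => ?_, fun X hA hB => ?_⟩
      · have hfe := abs_le.1 (hf.abs_le_one e)
        obtain ⟨-, h⟩ | ⟨-, x, hx, h⟩ := p.flow_cases e
        · simpa [h] using hf.abs_le_one e
        · have := hp _ hx
          rw [Pi.add_apply, h, abs_le]
          unfold orient at this ⊢
          split_ifs at this ⊢ <;> constructor <;> linarith
      · rw [map_add, hf.netFlow_eq X hA hB, p.netFlow_flow hA hB, Nat.cast_succ]
    · have hsat : netFlow X (-f) ≤ -1 * G.delta X := netFlow_le_mul_delta fun e u v h hu hv => by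
        have := hX e u v h hu hv
        rw [Pi.neg_apply]
        linarith
      rw [map_neg, hf.netFlow_eq X hA hB] at hsat
      have := hm X hA hB
      omega

lemma CrossingPath.sub_flow_cases {f : G.E → ℤ} (p : G.CrossingPath A B)
    (hp : ∀ d ∈ p.walk.darts, G.orient d.1 d.2 * f d.1 = 1) (e : G.E) :
    e ∈ p.walk.edges ∧ f e ≠ 0 ∧ (f - p.walk.flow) e = 0 ∨
      e ∉ p.walk.edges ∧ (f - p.walk.flow) e = f e := by
  obtain ⟨he, h⟩ | ⟨he, x, hx, h⟩ := p.flow_cases e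
  · exact .inr ⟨he, by simp [h]⟩
  · have hone := hp _ hx
    refine .inl ⟨he, right_ne_zero_of_mul_eq_one hone, ?_⟩
    rw [Pi.sub_apply, h, sub_eq_zero]
    calc f e = G.orient e x * (G.orient e x * f e) := by
          rw [← mul_assoc, orient_mul_self, one_mul]
      _ = G.orient e x := by rw [hone, mul_one]

lemma IsFlow.sub_flow {m : ℤ} {f : G.E → ℤ} (hf : IsFlow A B f m) (p : G.CrossingPath A B)
    (hp : ∀ d ∈ p.walk.darts, G.orient d.1 d.2 * f d.1 = 1) :
    IsFlow A B (f - p.walk.flow) (m - 1) where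
  abs_le_one e := by
    obtain ⟨-, -, h⟩ | ⟨-, h⟩ := p.sub_flow_cases hp e
    · simp [h]
    · exact h ▸ hf.abs_le_one e
  netFlow_eq X hA hB := by rw [map_sub, hf.netFlow_eq X hA hB, p.netFlow_flow hA hB]

lemma IsFlow.exists_saturated_crossingPath {m : ℤ} {f : G.E → ℤ} (hf : IsFlow A B f m)
    (hm : 0 < m) :
    ∃ p : G.CrossingPath A B, ∀ d ∈ p.walk.darts, G.orient d.1 d.2 * f d.1 = 1 := by
  refine (exists_crossingPath_or_barrier (fun e u => G.orient e u * f e = 1) A B).resolve_right ?_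
  rintro ⟨X, hA, hB, hX⟩
  have hsat : netFlow X f ≤ 0 * G.delta X := netFlow_le_mul_delta fun e u v h hu hv => by
    have := hX e u v h hu hv
    have := abs_le.1 (hf.abs_le_one e)
    unfold orient at *
    split_ifs at * <;> omega
  rw [hf.netFlow_eq X hA hB] at hsat
  omega

lemma IsFlow.exists_crossingPaths {m : ℕ} {f : G.E → ℤ} (hf : IsFlow A B f m) :
    ∃ P : Fin m → G.CrossingPath A B,
      (Pairwise fun i j => (P i).walk.edges.Disjoint (P j).walk.edges) ∧
      ∀ i, ∀ e ∈ (P i).walk.edges, f e ≠ 0 := by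
  induction m generalizing f with
  | zero => exact ⟨finZeroElim, fun i => i.elim0, fun i => i.elim0⟩
  | succ m ih =>
    obtain ⟨p, hp⟩ := hf.exists_saturated_crossingPath (by positivity)
    obtain ⟨P, hdisj, hP⟩ := ih (f := f - p.walk.flow) (by simpa using hf.sub_flow p hp)
    have hpP : ∀ i, ∀ e ∈ (P i).walk.edges, e ∉ p.walk.edges ∧ f e ≠ 0 := by
      intro i e he
      obtain ⟨-, -, h⟩ | ⟨hep, h⟩ := p.sub_flow_cases hp e
      · exact absurd h (hP i e he)
      · exact ⟨hep, h ▸ hP i e he⟩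
    refine ⟨Fin.cons p P, ?_, ?_⟩
    · refine Fin.cases (Fin.cases (absurd rfl) fun j _ e he he' => (hpP j e he').1 he) fun i =>
        Fin.cases (fun _ e he he' => (hpP i e he).1 he') fun j hij => ?_
      exact hdisj fun h => hij (congrArg Fin.succ h)
    · refine Fin.cases (fun e he => ?_) fun i e he => (hpP i e he).2
      obtain ⟨-, h, -⟩ | ⟨hep, -⟩ := p.sub_flow_cases hp e
      exacts [h, absurd he hep]

/-- Menger's theorem for edge-disjoint paths. -/
theorem exists_disjoint_crossingPaths {m : ℕ} (hm : ∀ X, A ⊆ X → X ⊆ B → m ≤ G.delta X) :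
    ∃ P : Fin m → G.CrossingPath A B,
      Pairwise fun i j => (P i).walk.edges.Disjoint (P j).walk.edges := by
  obtain ⟨f, hf⟩ := exists_isFlow hm
  obtain ⟨P, hP, -⟩ := hf.exists_crossingPaths
  exact ⟨P, hP⟩

end Menger

end Multigraph

section Chain

lemma exists_block_or_exists_strictMonoOn {α : Type*} [Preorder α] (p : α → Prop) {N L : ℕ}
    {T : ℕ → α} (hT : StrictMonoOn T (Set.Iic ((N + 1) * (L + 1)))) :
    (∃ s, s + L ≤ (N + 1) * (L + 1) ∧ ∀ x ∈ Set.Icc (T s) (T (s + L)), p x) ∨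
      ∃ x : ℕ → α, StrictMonoOn x (Set.Iic N) ∧ x N ≤ T ((N + 1) * (L + 1)) ∧
        ∀ q ≤ N, ¬ p (x q) := by
  -- The chain is cut into `N + 1` blocks of length `L`, the `q`-th one starting at `q * (L + 1)`.
  have hblock : ∀ q ≤ N, q * (L + 1) + L < (N + 1) * (L + 1) := fun q hq => by
    have := Nat.mul_le_mul_right (L + 1) (Nat.add_le_add_right hq 1)
    rw [Nat.add_one_mul] at this
    omega
  by_cases h : ∃ q ≤ N, ∀ x ∈ Set.Icc (T (q * (L + 1))) (T (q * (L + 1) + L)), p x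
  · obtain ⟨q, hq, hp⟩ := h
    exact .inl ⟨_, (hblock q hq).le, hp⟩
  have : Nonempty α := ⟨T 0⟩
  push Not at h
  choose! x hx hpx using h
  refine .inr ⟨x, fun q hq r hr hqr => ?_, (hx N le_rfl).2.trans ?_, hpx⟩
  · have hlt : q * (L + 1) + L < r * (L + 1) := by
      have := Nat.mul_le_mul_right (L + 1) (Nat.succ_le_of_lt hqr)
      rw [Nat.succ_mul] at this
      omega
    have hle := hblock r hr
    calc x q ≤ T (q * (L + 1) + L) := (hx q hq).2
      _ < T (r * (L + 1)) := hT (hblock q hq).le (Set.mem_Iic.2 (by omega)) hlt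
      _ ≤ x r := (hx r hr).1
  · exact hT.monotoneOn (hblock N le_rfl).le (Set.mem_Iic.2 le_rfl) (hblock N le_rfl).le

theorem exists_subchain_eq_of_forall_le (M : ℕ → ℕ) (K : ℕ) : ∃ N, ∀ {α : Type*} [Preorder α]
    (δ : α → ℕ) (T : ℕ → α), StrictMonoOn T (Set.Iic N) → (∀ i ≤ N, δ (T i) ≤ K) →
    ∃ m, ∃ T' : ℕ → α, StrictMonoOn T' (Set.Iic (M m)) ∧ T' (M m) ≤ T N ∧
      (∀ i ≤ M m, δ (T' i) = m) ∧ ∀ X ∈ Set.Icc (T' 0) (T' (M m)), m ≤ δ X := by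
  induction K with
  | zero => exact ⟨M 0, fun δ T hT hδ =>
      ⟨0, T, hT, le_rfl, fun i hi => Nat.le_zero.1 (hδ i hi), fun _ _ => Nat.zero_le _⟩⟩
  | succ K ih =>
    obtain ⟨N, hN⟩ := ih
    set L := M (K + 1)
    refine ⟨(N + 1) * (L + 1), fun {α} _ δ T hT hδ => ?_⟩
    obtain ⟨s, hs, hmin⟩ | ⟨X, hX, hXN, hδX⟩ :=
      exists_block_or_exists_strictMonoOn (fun X => K + 1 ≤ δ X) hT
    · have hmono : ∀ i j, i ≤ j → j ≤ L → T (s + i) ≤ T (s + j) := fun i j hij hj =>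
        hT.monotoneOn (Set.mem_Iic.2 (by omega)) (Set.mem_Iic.2 (by omega)) (by omega)
      refine ⟨K + 1, fun i => T (s + i), fun i hi j hj hij => ?_,
        hT.monotoneOn hs (Set.mem_Iic.2 le_rfl) hs, fun i hi => ?_, hmin⟩
      · rw [Set.mem_Iic] at hi hj
        exact hT (Set.mem_Iic.2 (by omega)) (Set.mem_Iic.2 (by omega)) (by omega)
      · exact (hδ _ (by omega)).antisymm
          (hmin _ ⟨hmono 0 i (Nat.zero_le i) hi, hmono i L hi le_rfl⟩)
    · obtain ⟨m, T', hT', hle, hδ', hmin⟩ :=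
        hN δ X hX fun q hq => Nat.le_of_lt_succ (not_le.1 (hδX q hq))
      exact ⟨m, T', hT', hle.trans hXN, hδ', hmin⟩

end Chain

namespace Multigraph

section Splicing

variable {G : Multigraph} {k m w : ℕ} {u v : G.V} {A B S T : Set G.V}

/-- A labelling by `Fin m` of the edges leaving `S`, recording their ends. It presents `G` as a join
of `m`-boundaried graphs on `S` and `Sᶜ`. -/
structure CutLabelling (G : Multigraph) (S : Set G.V) (m : ℕ) where
  edge : Fin m → G.E
  inner : Fin m → S
  outer : Fin m → ↥Sᶜ
  joins : ∀ p, G.Joins (edge p) (inner p) (outer p)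
  cutEdges_subset : G.cutEdges S ⊆ Set.range edge

/-- Every edge of the `p`-th path which leaves `S` is the edge labelled `p`. -/
def CutLabelling.Follows (L : G.CutLabelling S m) (P : Fin m → G.CrossingPath A B) : Prop :=
  ∀ p, ∀ e ∈ (P p).walk.edges, e ∈ G.cutEdges S → e = L.edge p

lemma exists_cutLabelling {P : Fin m → G.CrossingPath A B}
    (hP : Pairwise fun i j => (P i).walk.edges.Disjoint (P j).walk.edges)
    (hA : A ⊆ S) (hB : S ⊆ B) (hS : G.delta S = m) : ∃ L : G.CutLabelling S m, L.Follows P := by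
  choose c hc hcut using fun p => (P p).walk.exists_mem_cutEdges (hA (P p).source_mem)
    fun h => (P p).target_notMem (hB h)
  have hinj : Function.Injective c := fun p q hpq =>
    by_contra fun hne => hP hne (hc p) (hpq ▸ hc q)
  have hrange : Set.range c = G.cutEdges S := by
    refine Set.eq_of_subset_of_ncard_le (Set.range_subset_iff.2 hcut) ?_
    rw [← Set.image_univ, Set.ncard_image_of_injective _ hinj, Set.ncard_univ, Nat.card_fin]
    exact hS.le
  choose x hx y hy hxy using fun p => exists_joins_of_mem_cutEdges (hcut p)
  refine ⟨⟨c, fun p => ⟨x p, hx p⟩, fun p => ⟨y p, hy p⟩, hxy, hrange.ge⟩, fun p e he hcr => ?_⟩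
  obtain ⟨q, rfl⟩ := hrange.ge hcr
  exact congrArg c (by_contra fun hne => hP hne (hc q) he)

lemma CutLabelling.dcw_le (L : G.CutLabelling S m) :
    dcw k G ≤ dcw k ((G.induce S).join (G.induce Sᶜ) L.inner L.outer) := by
  classical
  refine dcw_le_of_equiv_of_surjective (Equiv.Set.sumCompl S)
    (Sum.elim (Sum.elim Subtype.val Subtype.val) L.edge) (fun e => ?_) ?_
  · by_cases he : e ∈ G.cutEdges S
    · obtain ⟨p, hp⟩ := L.cutEdges_subset he
      exact ⟨.inr p, hp⟩
    · rw [mem_cutEdges, not_not] at he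
      by_cases h : (G.ends e).1 ∈ S
      · exact ⟨.inl (.inl ⟨e, h, he.1 h⟩), rfl⟩
      · exact ⟨.inl (.inr ⟨e, h, mt he.2 h⟩), rfl⟩
  · rintro ((e | e) | p)
    exacts [.inl rfl, .inl rfl, L.joins p]

namespace Walk

lemma exists_last_visit (p : G.Walk u v) (hv : v ∉ T) (h : ∃ z ∈ p.support, z ∈ T) :
    ∃ x ∈ T, ∃ q : G.Walk x v, q.edges ⊆ p.edges ∧ ∀ z ∈ q.support, z ∈ T → z = x := by
  induction p with
  | nil w => simp_all [support]
  | @cons u w v e he p ih =>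
    by_cases hp : ∃ z ∈ p.support, z ∈ T
    · obtain ⟨x, hx, q, hq, hqT⟩ := ih hv hp
      exact ⟨x, hx, q, fun _ hz => .tail _ (hq hz), hqT⟩
    · have huT : u ∈ T := by simp_all [support]
      refine ⟨u, huT, .cons e he p, List.Subset.refl _, fun z hz hzT => ?_⟩
      exact (List.mem_cons.1 hz).resolve_right fun hz => hp ⟨z, hz, hzT⟩

lemma exists_first_exit (p : G.Walk u v) (hv : v ∉ S) :
    ∃ y ∉ S, ∃ q : G.Walk u y, q.edges ⊆ p.edges ∧ q.support ⊆ p.support ∧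
      ∀ z ∈ q.support, z ∉ S → z = y := by
  induction p with
  | nil w => exact ⟨w, hv, .nil w, by simp [support]⟩
  | @cons u w v e he p ih =>
    by_cases hu : u ∈ S
    · obtain ⟨y, hy, q, hedges, hsupp, hqS⟩ := ih hv
      refine ⟨y, hy, .cons e he q, List.cons_subset_cons _ hedges, List.cons_subset_cons _ hsupp,
        fun z hz hzS => ?_⟩
      obtain rfl | hz := List.mem_cons.1 hz
      exacts [absurd hu hzS, hqS z hz hzS]
    · exact ⟨u, hu, .nil u, by simp [edges, support]⟩

end Walk

/-- The path meets `A` and the complement of `B` only in its ends. -/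
def CrossingPath.IsTight (p : G.CrossingPath A B) : Prop :=
  ∀ z ∈ p.walk.support, (z ∈ A → z = p.source) ∧ (z ∉ B → z = p.target)

lemma CrossingPath.exists_isTight (p : G.CrossingPath A B) (hA : A ⊆ T) (hTS : T ⊆ S)
    (hB : S ⊆ B) : ∃ q : G.CrossingPath T S, q.IsTight ∧ q.walk.edges ⊆ p.walk.edges := by
  have htarget : p.target ∉ S := fun h => p.target_notMem (hB h)
  obtain ⟨x, hx, q, hq, hqT⟩ := p.walk.exists_last_visit (fun h => htarget (hTS h))
    ⟨_, p.walk.start_mem_support, hA p.source_mem⟩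
  obtain ⟨y, hy, r, hr, hrq, hrS⟩ := q.exists_first_exit htarget
  obtain ⟨o, ho, hor, hdarts⟩ := r.exists_path
  refine ⟨⟨x, y, o, hx, hy, ho⟩, fun z hz => ⟨hqT z (hrq (hor hz)), hrS z (hor hz)⟩, fun e he => ?_⟩
  have hedges : o.edges ⊆ r.edges := by
    simpa only [Walk.map_fst_darts] using List.map_subset Prod.fst hdarts
  exact hq (hr (hedges he))

/-- The walk along a single edge. -/
def edgeWalk (G : Multigraph) (e : G.E) : G.Walk (G.ends e).1 (G.ends e).2 :=
  .cons e (.inl rfl) (.nil _)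

lemma nodup_support_edgeWalk (e : G.E) : (G.edgeWalk e).support.Nodup := by
  simp [edgeWalk, Walk.support, G.loopless e]

lemma eq_of_mem_edges_edgeWalk {e f : G.E} (h : f ∈ (G.edgeWalk e).edges) : f = e := by
  simpa [edgeWalk, Walk.edges] using h

lemma eq_or_eq_of_mem_support_edgeWalk {e : G.E} (h : v ∈ (G.edgeWalk e).support) :
    v = (G.ends e).1 ∨ v = (G.ends e).2 := by
  simpa [edgeWalk, Walk.support] using h

lemma strongImmersion_deleteEdges (F : Set G.E) : StrongImmersion (G.deleteEdges F) G := by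
  refine ⟨⟨⟨id, Function.injective_id, fun e => G.edgeWalk e.1,
    fun e => nodup_support_edgeWalk _, fun e e' hne f hf hf' => hne (Subtype.ext ?_)⟩, ?_⟩⟩
  · exact (eq_of_mem_edges_edgeWalk hf).symm.trans (eq_of_mem_edges_edgeWalk hf')
  · intro e z hz h₁ h₂
    exact ((eq_or_eq_of_mem_support_edgeWalk hz).elim h₁ h₂).elim

lemma CrossingPath.IsTight.not_both_ends {p : G.CrossingPath A B} (hp : p.IsTight) {e : G.E}
    (he : e ∈ p.walk.edges) :
    ¬ ((G.ends e).1 ∈ A ∧ (G.ends e).2 ∈ A) ∧ ¬ ((G.ends e).1 ∈ Bᶜ ∧ (G.ends e).2 ∈ Bᶜ) := by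
  have h₁ := hp _ (p.walk.mem_support_of_joins he (joins_ends e))
  have h₂ := hp _ (p.walk.mem_support_of_joins he (joins_ends e).symm)
  exact ⟨fun h => G.loopless e ((h₁.1 h.1).trans (h₂.1 h.2).symm),
    fun h => G.loopless e ((h₁.2 h.1).trans (h₂.2 h.2).symm)⟩

lemma injective_sumElim_val (hTS : T ⊆ S) :
    Function.Injective (Sum.elim Subtype.val Subtype.val : T ⊕ ↥Sᶜ → G.V) :=
  Subtype.val_injective.sumElim Subtype.val_injective fun a b h => b.2 (h ▸ hTS a.2)

theorem strongImmersion_join_of_isTight (hTS : T ⊆ S) (Q : Fin m → G.CrossingPath T S)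
    (htight : ∀ p, (Q p).IsTight)
    (hQ : Pairwise fun i j => (Q i).walk.edges.Disjoint (Q j).walk.edges) :
    StrongImmersion ((G.induce T).join (G.induce Sᶜ) (fun p => ⟨_, (Q p).source_mem⟩)
      (fun p => ⟨_, (Q p).target_notMem⟩)) G := by
  let J := (G.induce T).join (G.induce Sᶜ) (fun p => ⟨_, (Q p).source_mem⟩)
      (fun p => ⟨_, (Q p).target_notMem⟩)
  let vmap : J.V → G.V := Sum.elim Subtype.val Subtype.val
  let emap : ∀ e : J.E, G.Walk (vmap (J.ends e).1) (vmap (J.ends e).2)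
    | .inl (.inl e) => G.edgeWalk e.1
    | .inl (.inr e) => G.edgeWalk e.1
    | .inr p => (Q p).walk
  refine ⟨⟨⟨vmap, injective_sumElim_val hTS, emap, ?_, ?_⟩, ?_⟩⟩
  · rintro ((e | e) | p)
    exacts [nodup_support_edgeWalk _, nodup_support_edgeWalk _, (Q p).nodup_support]
  · have hsides : ∀ e : (G.induce T).E, ∀ e' : (G.induce Sᶜ).E, e.1 ≠ e'.1 := fun e e' h =>
      e'.2.1 (h ▸ hTS e.2.1)
    have hpath : ∀ p, ∀ f ∈ (Q p).walk.edges,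
        (∀ e : (G.induce T).E, f ≠ e.1) ∧ ∀ e : (G.induce Sᶜ).E, f ≠ e.1 := fun p f hf =>
      ⟨fun e h => ((htight p).not_both_ends hf).1 (h ▸ e.2),
        fun e h => ((htight p).not_both_ends hf).2 (h ▸ e.2)⟩
    rintro ((e | e) | p) ((e' | e') | p') hne f hf hf'
    · exact hne (congrArg (fun e => Sum.inl (Sum.inl e))
        (Subtype.ext ((eq_of_mem_edges_edgeWalk hf).symm.trans (eq_of_mem_edges_edgeWalk hf'))))
    · exact hsides e e' ((eq_of_mem_edges_edgeWalk hf).symm.trans (eq_of_mem_edges_edgeWalk hf'))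
    · exact (hpath p' f hf').1 e (eq_of_mem_edges_edgeWalk hf)
    · exact hsides e' e ((eq_of_mem_edges_edgeWalk hf').symm.trans (eq_of_mem_edges_edgeWalk hf))
    · exact hne (congrArg (fun e => Sum.inl (Sum.inr e))
        (Subtype.ext ((eq_of_mem_edges_edgeWalk hf).symm.trans (eq_of_mem_edges_edgeWalk hf'))))
    · exact (hpath p' f hf').2 e (eq_of_mem_edges_edgeWalk hf)
    · exact (hpath p f hf).1 e' (eq_of_mem_edges_edgeWalk hf')
    · exact (hpath p f hf).2 e' (eq_of_mem_edges_edgeWalk hf')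
    · exact hQ (fun h => hne (congrArg _ h)) hf hf'
  · rintro ((e | e) | p) z hz h₁ h₂
    · exact ((eq_or_eq_of_mem_support_edgeWalk hz).elim h₁ h₂).elim
    · exact ((eq_or_eq_of_mem_support_edgeWalk hz).elim h₁ h₂).elim
    · rintro ⟨a | b, rfl⟩
      exacts [h₁ ((htight p _ hz).1 a.2), h₂ ((htight p _ hz).2 b.2)]

theorem CutLabelling.strongImmersion_join {P : Fin m → G.CrossingPath A B}
    (hP : Pairwise fun i j => (P i).walk.edges.Disjoint (P j).walk.edges)
    (hA : A ⊆ T) (hTS : T ⊆ S) (hB : S ⊆ B) {L : G.CutLabelling T m} (hL : L.Follows P)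
    {L' : G.CutLabelling S m} (hL' : L'.Follows P) :
    StrongImmersion ((G.induce T).join (G.induce Sᶜ) L.inner L'.outer) G := by
  choose Q htight hQP using fun p => (P p).exists_isTight hA hTS hB
  have hsource : L.inner = fun p => ⟨_, (Q p).source_mem⟩ := by
    funext p
    obtain ⟨e, he, hcut⟩ := (Q p).walk.exists_mem_cutEdges (Q p).source_mem
      fun h => (Q p).target_notMem (hTS h)
    obtain rfl := hL p e (hQP p he) hcut
    exact Subtype.ext
      ((htight p _ ((Q p).walk.mem_support_of_joins he (L.joins p))).1 (L.inner p).2)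
  have htarget : L'.outer = fun p => ⟨_, (Q p).target_notMem⟩ := by
    funext p
    obtain ⟨e, he, hcut⟩ := (Q p).walk.exists_mem_cutEdges (hTS (Q p).source_mem)
      (Q p).target_notMem
    obtain rfl := hL' p e (hQP p he) hcut
    exact Subtype.ext
      ((htight p _ ((Q p).walk.mem_support_of_joins he (L'.joins p).symm)).2 (L'.outer p).2)
  rw [hsource, htarget]
  exact strongImmersion_join_of_isTight hTS Q htight fun i j hij e he he' =>
    hP hij (hQP i he) (hQP j he')

theorem CutLabelling.signature_ne {P : Fin m → G.CrossingPath A B}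
    (hP : Pairwise fun i j => (P i).walk.edges.Disjoint (P j).walk.edges)
    (hA : A ⊆ T) (hTS : T ⊂ S) (hB : S ⊆ B) {L : G.CutLabelling T m} (hL : L.Follows P)
    {L' : G.CutLabelling S m} (hL' : L'.Follows P)
    (hG : G ∈ obstructions StrongImmersion (dcwClass w k)) (hS : (G.induce S).cutwidth ≤ k) :
    signature k (A := G.induce T) L.inner ≠ signature k (A := G.induce S) L'.inner := by
  intro hsig
  have himm := CutLabelling.strongImmersion_join hP hA hTS.subset hB hL hL'
  have hcard : Nat.card (T ⊕ ↥Sᶜ) < Nat.card G.V := by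
    rw [Nat.card_sum, ← Set.ncard_add_ncard_compl S]
    exact Nat.add_lt_add_right (Set.ncard_lt_ncard hTS) _
  have hdcw : dcw k ((G.induce T).join (G.induce Sᶜ) L.inner L'.outer) ≤ w :=
    hG.2 _ himm fun ⟨φ⟩ => hcard.ne (Nat.card_congr φ.fv)
  exact hG.1 (L'.dcw_le.trans (dcw_join_le_of_signature_eq hsig hS hdcw))

theorem exists_chain_bound_of_mem_obstructions (k K : ℕ) : ∃ N, ∀ (w : ℕ) (G : Multigraph),
    G ∈ obstructions StrongImmersion (dcwClass w k) → ∀ T : ℕ → Set G.V,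
    StrictMonoOn T (Set.Iic N) → (∀ i ≤ N, G.delta (T i) ≤ K) →
    ∃ X ⊆ T N, k < (G.induce X).cutwidth := by
  obtain ⟨N, hN⟩ := exists_subchain_eq_of_forall_le
    (fun m => Nat.card (Set (Fin (m + 1) × boundedWords m k))) K
  refine ⟨N, fun w G hG T hT hδ => ?_⟩
  by_contra! hcw
  obtain ⟨m, T', hT', hle, hδ', hmin⟩ := hN G.delta T hT hδ
  set M := Nat.card (Set (Fin (m + 1) × boundedWords m k))
  obtain ⟨P, hP⟩ := exists_disjoint_crossingPaths fun X hA hB => hmin X ⟨hA, hB⟩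
  have hi : ∀ i : Fin (M + 1), (i : ℕ) ≤ M := fun i => Nat.le_of_lt_succ i.2
  have hbot : ∀ i : Fin (M + 1), T' 0 ⊆ T' i := fun i =>
    hT'.monotoneOn (Nat.zero_le M) (hi i) (Nat.zero_le i)
  have htop : ∀ i : Fin (M + 1), T' i ⊆ T' M := fun i =>
    hT'.monotoneOn (hi i) (le_refl M) (hi i)
  choose L hL using fun i : Fin (M + 1) =>
    exists_cutLabelling hP (hbot i) (htop i) (hδ' i (hi i))
  have hinj : Function.Injective fun i : Fin (M + 1) =>
    signature k (A := G.induce (T' i)) (L i).inner :=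
    .of_lt_imp_ne fun i j hij => CutLabelling.signature_ne hP (hbot i)
      (hT' (hi i) (hi j) hij) (htop j) (hL i) (hL j) hG (hcw _ ((htop j).trans hle))
  have := Nat.card_le_card_of_injective _ hinj
  rw [Nat.card_fin] at this
  exact Nat.not_succ_le_self M this

end Splicing

end Multigraph

section Gap

variable {α : Type*} [LinearOrder α] {N : ℕ}

lemma exists_strictMonoOn_Iic_of_lt_card {I : Finset α} (hI : N < I.card) :
    ∃ a : ℕ → α, StrictMonoOn a (Set.Iic N) ∧ ∀ i, a i ∈ I := by
  refine ⟨fun i => I.orderEmbOfFin rfl ⟨min i N, (min_le_right i N).trans_lt hI⟩, ?_,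
    fun i => I.orderEmbOfFin_mem rfl _⟩
  intro i hi j hj hij
  rw [Set.mem_Iic] at hi hj
  exact (I.orderEmbOfFin rfl).strictMono (Fin.mk_lt_mk.2 (by omega))

theorem exists_strictMonoOn_Iic_disjoint_Icc [Finite α] {X : Set α}
    (hX : (X.ncard + 1) * N < Xᶜ.ncard) :
    ∃ a : ℕ → α, StrictMonoOn a (Set.Iic N) ∧ Disjoint X (Set.Icc (a 0) (a N)) := by
  classical
  have := Fintype.ofFinite α
  -- Elements of `Xᶜ` with the same number of predecessors in `X` lie in a common gap of `X`.
  let rank : α → ℕ := fun v => (X ∩ Set.Iio v).ncard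
  have hrank : ∀ v ∈ Xᶜ.toFinset, rank v ∈ Finset.range (X.ncard + 1) := fun v _ =>
    Finset.mem_range_succ_iff.2 (Set.ncard_le_ncard Set.inter_subset_left)
  obtain ⟨q, -, hq⟩ := Finset.exists_lt_card_fiber_of_mul_lt_card_of_maps_to hrank
    (by rwa [Finset.card_range, ← Set.ncard_eq_toFinset_card'])
  obtain ⟨a, ha, hmem⟩ := exists_strictMonoOn_Iic_of_lt_card hq
  simp only [Finset.mem_filter, Set.mem_toFinset] at hmem
  refine ⟨a, ha, Set.disjoint_left.2 fun x hx hxa => ?_⟩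
  have hxN : x < a N := hxa.2.lt_of_ne fun h => (hmem N).1 (h ▸ hx)
  have hlt : rank (a 0) < rank (a N) := Set.ncard_lt_ncard
    ⟨Set.inter_subset_inter_right _ (Set.Iio_subset_Iio (hxa.1.trans hxa.2)),
      fun h => (h ⟨hx, hxN⟩).2.not_ge hxa.1⟩
  exact hlt.ne ((hmem 0).2.trans (hmem N).2.symm)

end Gap

namespace Multigraph

section Bound

variable {G : Multigraph} {k n w N s t : ℕ} {F : Set G.E} {ρ : G.V → ℕ}

/-- The set of ends of the edges in `F`. -/
def endSet (G : Multigraph) (F : Set G.E) : Set G.V :=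
  (fun e => (G.ends e).1) '' F ∪ (fun e => (G.ends e).2) '' F

lemma ncard_endSet_le : (G.endSet F).ncard ≤ 2 * F.ncard := by
  rw [two_mul]
  exact (Set.ncard_union_le _ _).trans
    (Nat.add_le_add (Set.ncard_image_le F.toFinite) (Set.ncard_image_le F.toFinite))

lemma delta_preimage_Ico_le (hF : Disjoint (G.endSet F) (ρ ⁻¹' Set.Ico s t))
    (hk : ∀ t, G.cutSize F {v | ρ v < t} ≤ k) : G.delta (ρ ⁻¹' Set.Ico s t) ≤ 2 * k := by
  have hsub : G.cutEdges (ρ ⁻¹' Set.Ico s t) ⊆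
      G.cutEdges {v | ρ v < s} \ F ∪ G.cutEdges {v | ρ v < t} \ F := by
    intro e he
    have heF : e ∉ F := fun heF => he (iff_of_false
      (Set.disjoint_left.1 hF (.inl ⟨e, heF, rfl⟩)) (Set.disjoint_left.1 hF (.inr ⟨e, heF, rfl⟩)))
    by_contra hcut
    simp only [Set.mem_union, Set.mem_sdiff, heF, not_false_eq_true, and_true, mem_cutEdges,
      not_or, not_not, Set.mem_ofPred_eq, Set.mem_preimage, Set.mem_Ico] at he hcut
    omega
  calc G.delta (ρ ⁻¹' Set.Ico s t)
      ≤ G.cutSize F {v | ρ v < s} + G.cutSize F {v | ρ v < t} :=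
        (Set.ncard_le_ncard hsub).trans (Set.ncard_union_le _ _)
    _ ≤ 2 * k := by have := hk s; have := hk t; omega

lemma exists_chain_of_lt_card (hF : F.ncard ≤ n) (hcw : (G.deleteEdges F).cutwidth ≤ k)
    (hcard : 2 * n + (2 * n + 1) * N < Nat.card G.V) :
    ∃ T : ℕ → Set G.V, StrictMonoOn T (Set.Iic N) ∧ (∀ i ≤ N, G.delta (T i) ≤ 2 * k) ∧
      ∀ X ⊆ T N, (G.induce X).cutwidth ≤ k := by
  obtain ⟨ρ, hρ, hk⟩ := cutwidth_deleteEdges_le_iff.1 hcw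
  have hends : (G.endSet F).ncard ≤ 2 * n := ncard_endSet_le.trans (Nat.mul_le_mul_left 2 hF)
  let _ : LinearOrder G.V := LinearOrder.lift' ρ hρ
  obtain ⟨a, ha, hdisj⟩ : ∃ a : ℕ → G.V, StrictMonoOn a (Set.Iic N) ∧
      Disjoint (G.endSet F) (Set.Icc (a 0) (a N)) := by
    refine exists_strictMonoOn_Iic_disjoint_Icc ?_
    have := Nat.mul_le_mul_right N (Nat.add_le_add_right hends 1)
    have := Set.ncard_add_ncard_compl (G.endSet F)
    omega
  let T : ℕ → Set G.V := fun i => ρ ⁻¹' Set.Ico (ρ (a 0)) (ρ (a i))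
  have hT : ∀ i ≤ N, Disjoint (G.endSet F) (T i) := fun i hi =>
    have hsub : T i ⊆ Set.Icc (a 0) (a N) := fun v hv =>
      ⟨hv.1, hv.2.le.trans (ha.monotoneOn hi (le_refl N) hi)⟩
    hdisj.mono_right hsub
  have hmono : StrictMonoOn T (Set.Iic N) := by
    intro i hi j hj hij
    have hsub : T i ⊆ T j := fun v hv => ⟨hv.1, hv.2.trans (ha hi hj hij)⟩
    have hai : a i ∈ T j := ⟨ha.monotoneOn (Nat.zero_le N) hi (Nat.zero_le i), ha hi hj hij⟩
    exact (Set.ssubset_iff_of_subset hsub).2 ⟨a i, hai, fun h => lt_irrefl _ h.2⟩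
  exact ⟨T, hmono, fun i hi => delta_preimage_Ico_le (hT i hi) hk,
    fun X hX => cutwidth_induce_le (fun e he h =>
      Set.disjoint_left.1 (hT N le_rfl) (.inl ⟨e, he, rfl⟩) (hX h.1)) hcw⟩

lemma dcw_le_succ_of_mem_obstructions (hG : G ∈ obstructions StrongImmersion (dcwClass w k)) :
    dcw k G ≤ w + 1 := by
  obtain h | ⟨⟨e⟩⟩ := isEmpty_or_nonempty G.E
  · exact dcw_le_card_edges.trans (by simp)
  · have hcard : Nat.card {f : G.E // f ∉ ({e} : Set G.E)} < Nat.card G.E :=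
      Finite.card_subtype_lt (x := e) (not_not.2 rfl)
    have hdcw : dcw k (G.deleteEdges {e}) ≤ w :=
      hG.2 _ (strongImmersion_deleteEdges {e}) fun ⟨φ⟩ => hcard.ne (Nat.card_congr φ.fe)
    calc dcw k G ≤ dcw k (G.deleteEdges {e}) + ({e} : Set G.E).ncard :=
          dcw_le_dcw_deleteEdges_add_ncard _
      _ ≤ w + 1 := by rw [Set.ncard_singleton]; exact Nat.add_le_add_right hdcw 1

end Bound

end Multigraph

open Multigraph in
/-- for every `k` there are constants `c`, `d` such that every minimal
strong-immersion obstruction for `C_{w,k}` has at most `c·w + d` vertices. -/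
theorem dcw_obstruction_linear_bound (k : ℕ) :
    ∃ c d : ℕ, ∀ w : ℕ, ∀ G : Multigraph,
      G ∈ obstructions StrongImmersion (dcwClass w k) →
      Nat.card G.V ≤ c * w + d := by
  obtain ⟨N, hN⟩ := exists_chain_bound_of_mem_obstructions k (2 * k)
  refine ⟨2 + 2 * N, 2 + 3 * N, fun w G hG => ?_⟩
  by_contra! hlarge
  obtain ⟨F, hF, hcw⟩ := dcw_le_iff.1 (dcw_le_succ_of_mem_obstructions hG)
  obtain ⟨T, hT, hδ, hsmall⟩ := exists_chain_of_lt_card (N := N) hF hcw (by linarith)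
  obtain ⟨X, hX, hlt⟩ := hN w G hG T hT hδ
  exact (hsmall X hX).not_gt hlt
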